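/- arXiv:1604.08713 — 2 statements merged into one kernel-verified Lean document; each statement's English description precedes it below -/
import Mathlib

section
/- (Hyperbolic Chang–Wilson–Wolff inequality) Let d ∈ ℕ, d ≥ 2, and let n ∈ ℕ. Suppose f is a finite linear combination of multiparameter Haar functions h_{j,m} with j ∈ ℕ_{−1}^d, |j| = n, m ∈ 𝔻_j. Then ‖f | exp(L^{2/(d−1)})‖ ≤ C · ‖Sf‖_{L_∞([0,1)^d)} for an absolute constant C (depending only on d and the choice of Young function), where Sf(x) = (∑_{j∈ℕ_{−1}^d} 2^{2|j|} ∑_{m∈𝔻_j} |⟨f, h_{j,m}⟩|² 1_{I_{j,m}}(x))^{1/2} is the dyadic square function of f. -/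
open MeasureTheory
open scoped ENNReal

noncomputable section

/-- The closed unit cube `[0,1]^d`. -/
def unitCube (d : ℕ) : Set (Fin d → ℝ) := Set.univ.pi fun _ => Set.Icc (0:ℝ) 1

/-- The half-open unit cube `[0,1)^d`. -/
def unitCubeIco (d : ℕ) : Set (Fin d → ℝ) := Set.univ.pi fun _ => Set.Ico (0:ℝ) 1

/-- Discrepancy function of the first `N` points of the sequence `S` in `[0,1)^d`. -/
def discSeq (d : ℕ) (S : ℕ → Fin d → ℝ) (N : ℕ) (x : Fin d → ℝ) : ℝ :=
  (Nat.card {k : Fin N // ∀ i, S k i < x i} : ℝ) / N - ∏ i, x i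

/-- One-dimensional Haar function `h_{j,m}`, with `h_{-1,0} = 1_{[0,1)}`. -/
def haar1 (j : ℤ) (m : ℕ) (x : ℝ) : ℝ :=
  if j = -1 then (if 0 ≤ x ∧ x < 1 then 1 else 0)
  else if (m:ℝ)/2^j.toNat ≤ x ∧ x < ((m:ℝ) + 1/2)/2^j.toNat then 1
  else if ((m:ℝ) + 1/2)/2^j.toNat ≤ x ∧ x < ((m:ℝ)+1)/2^j.toNat then -1
  else 0

/-- `d`-dimensional (tensor product) Haar function. -/
def haarFn (d : ℕ) (j : Fin d → ℤ) (m : Fin d → ℕ) (x : Fin d → ℝ) : ℝ :=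
  ∏ i, haar1 (j i) (m i) (x i)

/-- Haar coefficient `⟨f, h_{j,m}⟩`. -/
def haarCoeff (d : ℕ) (f : (Fin d → ℝ) → ℝ) (j : Fin d → ℤ) (m : Fin d → ℕ) : ℝ :=
  ∫ x in unitCube d, f x * haarFn d j m x

/-- `|j| = max(j₁,0) + ⋯ + max(j_d,0)`. -/
def jnorm (d : ℕ) (j : Fin d → ℤ) : ℕ := ∑ i, (j i).toNat

/-- One-dimensional dyadic interval `I_{j,m}`. -/
def dyadicI (j : ℤ) (m : ℕ) : Set ℝ :=
  Set.Ico ((m:ℝ)/2^j.toNat) (((m:ℝ)+1)/2^j.toNat)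

/-- `d`-dimensional dyadic box `I_{j,m}`. -/
def dyadicBox (d : ℕ) (j : Fin d → ℤ) (m : Fin d → ℕ) : Set (Fin d → ℝ) :=
  Set.univ.pi fun i => dyadicI (j i) (m i)

/-- The index set `𝔻_j` as a finset. -/
def Dfin (d : ℕ) (j : Fin d → ℤ) : Finset (Fin d → ℕ) :=
  Fintype.piFinset fun i => Finset.range (2 ^ (j i).toNat)

/-- The index set `𝔻_j` for `j ∈ ℕ₀^d`. -/
def Dfin0 (d : ℕ) (j : Fin d → ℕ) : Finset (Fin d → ℕ) :=
  Fintype.piFinset fun i => Finset.range (2 ^ (j i))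

/-- Coordinate of the `k`-th point of a digital sequence over `𝔽₂` with generating
matrix `C` (`0`-based rows and columns). -/
def digitalCoord (C : ℕ → ℕ → ZMod 2) (k : ℕ) : ℝ :=
  ∑' i : ℕ,
    (((∑ ℓ ∈ Finset.range (k+1), C i ℓ * (if k.testBit ℓ then 1 else 0)).val : ℕ) : ℝ) / 2 ^ (i + 1)

/-- The digital sequence over `𝔽₂` generated by matrices `C 0, …, C (d-1)`. -/
def digitalSeq (d : ℕ) (C : Fin d → ℕ → ℕ → ZMod 2) : ℕ → Fin d → ℝ :=
  fun k j => digitalCoord (C j) k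

/-- `C 0, …, C (d-1)` generate an order `α` digital `(t,n,d)`-net over `𝔽₂`,
where the relevant submatrices have `q` rows (`q ≥ αn`) and `n` columns.
Row indices are `0`-based; the `1`-based row value of row `r` is `r+1`. -/
def IsOrderNet (α n t q d : ℕ) (C : Fin d → ℕ → ℕ → ZMod 2) : Prop :=
  ∀ (ν : Fin d → ℕ) (r : ∀ j : Fin d, Fin (ν j) → ℕ),
    (∀ j, StrictAnti (r j)) →
    (∀ j l, r j l < q) →
    (∑ j, ∑ l ∈ Finset.univ.filter (fun l : Fin (ν j) => (l:ℕ) < α), (r j l + 1)) ≤ α * n - t →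
    LinearIndependent (ZMod 2)
      (fun p : Σ j : Fin d, Fin (ν j) => fun col : Fin n => C p.1 (r p.1 p.2) col)

/-- `C 0, …, C (d-1)` generate an order `α` digital `(t,d)`-sequence over `𝔽₂`. -/
def IsOrderSeq (α t d : ℕ) (C : Fin d → ℕ → ℕ → ZMod 2) : Prop :=
  ∀ n : ℕ, t < α * n → IsOrderNet α n t (α * n) d C

/-- The condition `e_{i,k,ℓ} = 0` for all `k > 2ℓ` (in `1`-based indexing). -/
def Triangular2 (d : ℕ) (E : Fin d → ℕ → ℕ → ZMod 2) : Prop :=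
  ∀ i k ℓ, 2 * (ℓ + 1) < k + 1 → E i k ℓ = 0

open scoped Classical in
/-- The quantity `λ(U)⁻¹ ∑_{j ∈ ℕ₀^d} 2^{|j|} ∑_{m : I_{j,m} ⊆ U} ⟨f,h_{j,m}⟩²`. -/
def bmoSq (d : ℕ) (f : (Fin d → ℝ) → ℝ) (U : Set (Fin d → ℝ)) : ℝ≥0∞ :=
  (volume U)⁻¹ * ∑' j : Fin d → ℕ, ∑ m ∈ Dfin0 d j,
    if dyadicBox d (fun i => (j i : ℤ)) m ⊆ U then
      (2:ℝ≥0∞) ^ (∑ i, j i) * ENNReal.ofReal ((haarCoeff d f (fun i => (j i : ℤ)) m)^2)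
    else 0

/-- The BMO (semi-)norm `‖f | bmo^d‖`. -/
def bmoNorm (d : ℕ) (f : (Fin d → ℝ) → ℝ) : ℝ≥0∞ :=
  (⨆ U : {U : Set (Fin d → ℝ) // MeasurableSet U ∧ U ⊆ unitCubeIco d ∧ 0 < volume U},
    bmoSq d f U.1) ^ (1/2 : ℝ)

/-- The Orlicz norm of `f` on `[0,1)^d` with respect to the Young function `ψ`,
with the convention `inf ∅ = ∞`. -/
def orliczNorm (d : ℕ) (ψ : ℝ → ℝ) (f : (Fin d → ℝ) → ℝ) : ℝ≥0∞ :=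
  ⨅ K : {K : ℝ // 0 < K ∧ ∫ x in unitCubeIco d, ψ (|f x| / K) ≤ 1}, ENNReal.ofReal K.1

/-- `ψ` is a Young function which coincides with `exp(x^β) - 1` for all large `x`. -/
def IsYoungExp (β : ℝ) (ψ : ℝ → ℝ) : Prop :=
  ConvexOn ℝ (Set.Ici 0) ψ ∧ ψ 0 = 0 ∧ (∀ x : ℝ, 0 < x → 0 < ψ x) ∧
    ∃ x₀ : ℝ, ∀ x ≥ x₀, ψ x = Real.exp (x ^ β) - 1

/-- The set of valid Haar indices `j ∈ ℕ_{-1}^d`. -/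
def validJ (d : ℕ) : Set (Fin d → ℤ) := {j | ∀ i, -1 ≤ j i}

/-- The `q`-th power of the Haar-characterization of the `S^s_{p,q}B` norm:
`∑_{j ∈ ℕ_{-1}^d} 2^{|j|(s-1/p+1)q} (∑_{m ∈ 𝔻_j} |⟨f,h_{j,m}⟩|^p)^{q/p}`. -/
def besovSum (d : ℕ) (p q s : ℝ) (f : (Fin d → ℝ) → ℝ) : ℝ≥0∞ :=
  ∑' j : validJ d,
    ENNReal.ofReal ((2:ℝ) ^ ((jnorm d j.1 : ℝ) * (s - 1/p + 1) * q) *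
      (∑ m ∈ Dfin d j.1, |haarCoeff d f j.1 m| ^ p) ^ (q / p))

/-- Coordinate of the `k`-th point of a digital net with `q × n` generating matrix `C`. -/
def netCoord (q n : ℕ) (C : ℕ → ℕ → ZMod 2) (k : ℕ) : ℝ :=
  ∑ i ∈ Finset.range q,
    ((∑ ℓ ∈ Finset.range n, C i ℓ * (if k.testBit ℓ then 1 else 0)).val : ℝ) / 2 ^ (i + 1)

/-- `n_{μ+1}`, with the convention `n_{r+1} = log₂ N` (indices `1`-based, `n` stored `0`-based). -/
def nExt (r : ℕ) (n : Fin r → ℕ) (N : ℕ) (μ : ℕ) : ℝ :=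
  if h : μ < r then (n ⟨μ, h⟩ : ℝ) else Real.logb 2 N

/-- `n_μ`, with the convention `n_0 = 0` (indices `1`-based, `n` stored `0`-based). -/
def nPrev (r : ℕ) (n : Fin r → ℕ) (μ : ℕ) : ℝ :=
  if h : 1 ≤ μ ∧ μ ≤ r then (n ⟨μ - 1, by omega⟩ : ℝ) else 0

/-- The dyadic square function `Sf`, valued in `ℝ≥0∞`. -/
def sqFnE (d : ℕ) (f : (Fin d → ℝ) → ℝ) (x : Fin d → ℝ) : ℝ≥0∞ :=
  (∑' j : validJ d, ∑ m ∈ Dfin d j.1,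
    ENNReal.ofReal ((2:ℝ) ^ (2 * jnorm d j.1) * (haarCoeff d f j.1 m)^2 *
      (dyadicBox d j.1 m).indicator (fun _ => (1:ℝ)) x)) ^ (1/2 : ℝ)

/-- `sup_{p > 1} p^{-1/β} ‖f‖_{L_p([0,1]^d)}`. -/
def supLp (d : ℕ) (β : ℝ) (f : (Fin d → ℝ) → ℝ) : ℝ≥0∞ :=
  ⨆ p : {p : ℝ // 1 < p},
    ENNReal.ofReal ((p:ℝ) ^ (-(1/β))) * eLpNorm f (ENNReal.ofReal (p:ℝ)) (volume.restrict (unitCube d))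

/-- `‖f | 𝒟₀^d‖² = ∑_{j ∈ ℕ₀^d} 2^{|j|} ∑_{m ∈ 𝔻_j} ⟨f,h_{j,m}⟩²`. -/
def dNormSq (d : ℕ) (f : (Fin d → ℝ) → ℝ) : ℝ≥0∞ :=
  ∑' j : Fin d → ℕ, ∑ m ∈ Dfin0 d j,
    ENNReal.ofReal ((2:ℝ) ^ (∑ i, j i) * (haarCoeff d f (fun i => (j i : ℤ)) m)^2)

/-- `‖f | 𝒟₀^d‖`. -/
def dNorm (d : ℕ) (f : (Fin d → ℝ) → ℝ) : ℝ≥0∞ := (dNormSq d f) ^ (1/2 : ℝ)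

/-!
The idea is that the `L_p` norm of a one-parameter Haar sum is at most `C √p` times that of its
square function, also for coefficients in a Hilbert space. Hilbert space values allow the inequality
to be iterated over coordinates, each at the cost of a further factor `√p`. On the layer `|j| = n`
all but one coordinate of `j` determine the remaining one up to two choices, so `d - 1` iterations
suffice, and `‖f‖_p ≤ C p^{(d-1)/2} ‖Sf‖_∞`, which is the growth of moments characterizing
`exp(L^{2/(d-1)})`.

For a sum `x` with squared square function `y`, the one-parameter inequality comes from the Bellman
function `‖x‖^{4k} / y^k - C_k^2 y^k` of exponent `2k`: averaged over the two children of a dyadic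
interval it does not increase, hence its integral is nonpositive, and the arithmetic-geometric mean
inequality bounds `‖x‖^{2k}` by a multiple of it plus `C_k y^k`. Since `|j| = n` makes `f` constant
on the cells of a dyadic grid, all these integrals are finite sums.
-/

section TwoPoint

variable {w t : ℝ}

lemma mul_add_pow_sub_sub_pow_le (hw : 0 ≤ w) (k : ℕ) :
    0 ≤ (w + t) ^ k + (w - t) ^ k ∧ 0 ≤ t * ((w + t) ^ k - (w - t) ^ k) ∧
      w * (t * ((w + t) ^ k - (w - t) ^ k)) ≤ k * t ^ 2 * ((w + t) ^ k + (w - t) ^ k) := by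
  induction k with
  | zero => simp
  | succ k ih =>
    obtain ⟨hA, hB, hAB⟩ := ih
    set A := (w + t) ^ k + (w - t) ^ k
    set B := (w + t) ^ k - (w - t) ^ k
    have hA' : (w + t) ^ (k + 1) + (w - t) ^ (k + 1) = w * A + t * B := by ring
    have hB' : (w + t) ^ (k + 1) - (w - t) ^ (k + 1) = w * B + t * A := by ring
    rw [hA', hB']
    refine ⟨by positivity, ?_, ?_⟩
    · calc 0 ≤ w * (t * B) + t ^ 2 * A := by positivity
        _ = t * (w * B + t * A) := by ring
    · have hrem : 0 ≤ (k + 1) * t ^ 2 * (t * B) := by positivity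
      push_cast
      linarith [mul_le_mul_of_nonneg_left hAB hw]

lemma add_pow_add_sub_pow_mul_pow_le (hw : 0 ≤ w) (k : ℕ) :
    ((w + t) ^ k + (w - t) ^ k) * w ^ k ≤ 2 * (w ^ 2 + k * t ^ 2) ^ k := by
  induction k with
  | zero => norm_num
  | succ k ih =>
    obtain ⟨-, -, hAB⟩ := mul_add_pow_sub_sub_pow_le (t := t) hw k
    calc ((w + t) ^ (k + 1) + (w - t) ^ (k + 1)) * w ^ (k + 1)
        = (w ^ 2 * ((w + t) ^ k + (w - t) ^ k)
            + w * (t * ((w + t) ^ k - (w - t) ^ k))) * w ^ k := by ring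
      _ ≤ (w ^ 2 * ((w + t) ^ k + (w - t) ^ k)
            + k * t ^ 2 * ((w + t) ^ k + (w - t) ^ k)) * w ^ k := by gcongr
      _ = (w ^ 2 + k * t ^ 2) * (((w + t) ^ k + (w - t) ^ k) * w ^ k) := by ring
      _ ≤ (w ^ 2 + k * t ^ 2) * (2 * (w ^ 2 + k * t ^ 2) ^ k) := by gcongr
      _ = 2 * (w ^ 2 + k * t ^ 2) ^ (k + 1) := by ring
      _ ≤ 2 * (w ^ 2 + (k + 1 : ℕ) * t ^ 2) ^ (k + 1) := by gcongr; simp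

lemma norm_add_sq_pow_add_norm_sub_sq_pow_le {V : Type*} [NormedAddCommGroup V]
    [InnerProductSpace ℝ V] (x h : V) {k : ℕ} (hk : 1 ≤ k) :
    (‖x + h‖ ^ 2) ^ k + (‖x - h‖ ^ 2) ^ k ≤ 2 * (‖x‖ ^ 2 + 5 * k * ‖h‖ ^ 2) ^ k := by
  have hk' : (1 : ℝ) ≤ k := mod_cast hk
  set X := ‖x‖ ^ 2
  set H := ‖h‖ ^ 2
  set t := 2 * inner ℝ x h
  have hX : 0 ≤ X := sq_nonneg _
  have hH : 0 ≤ H := sq_nonneg _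
  have ht : t ^ 2 ≤ 4 * (X * H) := by
    have := real_inner_mul_inner_self_le x h
    simp only [real_inner_self_eq_norm_sq] at this
    linarith
  rw [show ‖x + h‖ ^ 2 = X + H + t by rw [norm_add_sq_real]; ring,
    show ‖x - h‖ ^ 2 = X + H - t by rw [norm_sub_sq_real]; ring]
  rcases (add_nonneg hX hH).eq_or_lt with hw | hw
  · obtain ⟨hX0, hH0⟩ := (add_eq_zero_iff_of_nonneg hX hH).1 hw.symm
    have ht0 : t = 0 := by rw [hX0] at ht; nlinarith
    simp [hX0, hH0, ht0, zero_pow (Nat.one_le_iff_ne_zero.1 hk)]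
  · refine le_of_mul_le_mul_right ?_ (pow_pos hw k)
    calc ((X + H + t) ^ k + (X + H - t) ^ k) * (X + H) ^ k
        ≤ 2 * ((X + H) ^ 2 + k * t ^ 2) ^ k := add_pow_add_sub_pow_mul_pow_le hw.le k
      _ ≤ 2 * ((X + 5 * k * H) * (X + H)) ^ k := by
          gcongr
          nlinarith [mul_le_mul_of_nonneg_left ht (zero_le_one.trans hk'), mul_nonneg hX hH,
            mul_nonneg (sub_nonneg.2 hk') (mul_nonneg hX hH),
            mul_nonneg (sub_nonneg.2 hk') (mul_nonneg hH hH), mul_nonneg hH hH]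
      _ = 2 * (X + 5 * k * H) ^ k * (X + H) ^ k := by rw [mul_pow, ← mul_assoc]

end TwoPoint

section Bellman

variable {k : ℕ} {X y H : ℝ}

/-- The Bellman function of the square function inequality with exponent `2k`: it is evaluated at
the squared norm `X` of a martingale and at its (shifted) squared square function `y`, and it does
not increase on average along the martingale. -/
def bellman (k : ℕ) (X y : ℝ) : ℝ := X ^ (2 * k) / y ^ k - (100 * k) ^ (2 * k) * y ^ k

lemma mul_add_pow_le_pow_sub_pow (hy : 0 ≤ y) (hH : 0 ≤ H) (j : ℕ) :
    H * (y + H) ^ j ≤ (y + H) ^ (j + 1) - y ^ (j + 1) := by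
  have : y * y ^ j ≤ y * (y + H) ^ j := by gcongr; linarith
  rw [pow_succ', pow_succ']
  linarith

lemma bellman_add_le_of_large (hX : 0 ≤ X) (hy : 0 < y) (hH : 0 ≤ H)
    (hlarge : 40 * k * (y + H) ≤ X) :
    bellman k (X + 10 * k * H) (y + H) ≤ bellman k X y := by
  have hratio : (X + 10 * k * H) ^ 2 / (y + H) ≤ X ^ 2 / y := by
    rw [div_le_div_iff₀ (by positivity) hy]
    have hk : (0 : ℝ) ≤ k := k.cast_nonneg
    have hsmall : 20 * k * X * (y + H) + 100 * (k * (y + H)) ^ 2 ≤ X ^ 2 := by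
      nlinarith [mul_nonneg hk (add_nonneg hy.le hH)]
    have hHY : k ^ 2 * H * y ≤ (k * (y + H)) ^ 2 := by
      nlinarith [mul_nonneg (sq_nonneg (k : ℝ)) (mul_nonneg hH hy.le),
        mul_nonneg (sq_nonneg (k : ℝ)) (sq_nonneg y), mul_nonneg (sq_nonneg (k : ℝ)) (sq_nonneg H)]
    nlinarith [mul_le_mul_of_nonneg_left hsmall hH, mul_le_mul_of_nonneg_left hHY hH,
      mul_nonneg (mul_nonneg hk hX) (mul_nonneg hH hH)]
  unfold bellman
  rw [pow_mul, pow_mul X, ← div_pow, ← div_pow]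
  gcongr
  linarith

lemma add_pow_two_mul_sub_pow_le (hk : 1 ≤ k) (hX : 0 ≤ X) (hy : 0 ≤ y) (hH : 0 ≤ H)
    (hsmall : X ≤ 40 * k * (y + H)) :
    (X + 10 * k * H) ^ (2 * k) - X ^ (2 * k)
      ≤ (100 * k) ^ (2 * k) * ((y + H) ^ k - y ^ k) * (y + H) ^ k := by
  obtain ⟨j, rfl⟩ : ∃ j, k = j + 1 := ⟨k - 1, by omega⟩
  set k := j + 1
  set Y := y + H
  have hX' : X + 10 * k * H ≤ 50 * k * Y := by
    have : (k : ℝ) * H ≤ k * Y := by gcongr; exact le_add_of_nonneg_left hy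
    linarith
  have hpow : (100 * k : ℝ) ^ (2 * k) = 2 ^ (2 * k) * (50 * k) ^ (2 * j + 2) := by
    rw [show (100 * k : ℝ) = 2 * (50 * k) by ring, mul_pow]
    rfl
  have hY : Y ^ j * Y ^ k = Y ^ (2 * j + 1) := by rw [← pow_add, two_mul, add_assoc]
  calc (X + 10 * k * H) ^ (2 * k) - X ^ (2 * k)
      ≤ |X + 10 * k * H - X| * (2 * k : ℕ) * max |X + 10 * k * H| |X| ^ (2 * k - 1) :=
        (le_abs_self _).trans (abs_pow_sub_pow_le ..)
    _ ≤ (50 * k * H) * (2 : ℝ) ^ (2 * k) * (50 * k * Y) ^ (2 * j + 1) := by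
        rw [abs_of_nonneg (by positivity : (0 : ℝ) ≤ X + 10 * k * H), abs_of_nonneg hX,
          max_eq_left (le_add_of_nonneg_right (by positivity)), add_sub_cancel_left,
          abs_of_nonneg (by positivity), show 2 * k - 1 = 2 * j + 1 by omega]
        gcongr
        · norm_num
        · exact_mod_cast (Nat.lt_two_pow_self (n := 2 * k)).le
    _ = (100 * k) ^ (2 * k) * (H * Y ^ j) * Y ^ k := by
        rw [hpow, mul_assoc _ (H * Y ^ j), mul_assoc H, hY, mul_pow _ Y, pow_succ _ (2 * j + 1)]
        ring
    _ ≤ (100 * k) ^ (2 * k) * (Y ^ k - y ^ k) * Y ^ k := by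
        gcongr
        exact mul_add_pow_le_pow_sub_pow hy hH j

lemma bellman_add_le_of_small (hk : 1 ≤ k) (hX : 0 ≤ X) (hy : 0 < y) (hH : 0 ≤ H)
    (hsmall : X ≤ 40 * k * (y + H)) :
    bellman k (X + 10 * k * H) (y + H) ≤ bellman k X y := by
  have hincr : (X + 10 * k * H) ^ (2 * k) / (y + H) ^ k
      ≤ X ^ (2 * k) / (y + H) ^ k + (100 * k) ^ (2 * k) * ((y + H) ^ k - y ^ k) := by
    rw [div_le_iff₀ (by positivity), add_mul, div_mul_cancel₀ _ (by positivity)]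
    linarith [add_pow_two_mul_sub_pow_le hk hX hy.le hH hsmall]
  have hmono : X ^ (2 * k) / (y + H) ^ k ≤ X ^ (2 * k) / y ^ k := by
    gcongr
    exact le_add_of_nonneg_right hH
  unfold bellman
  linarith

lemma bellman_add_le (hk : 1 ≤ k) (hX : 0 ≤ X) (hy : 0 < y) (hH : 0 ≤ H) :
    bellman k (X + 10 * k * H) (y + H) ≤ bellman k X y := by
  rcases le_total (40 * k * (y + H)) X with hlarge | hsmall
  · exact bellman_add_le_of_large hX hy hH hlarge
  · exact bellman_add_le_of_small hk hX hy hH hsmall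

lemma bellman_add_bellman_sub_le {V : Type*} [NormedAddCommGroup V] [InnerProductSpace ℝ V]
    (hk : 1 ≤ k) (hy : 0 < y) (x h : V) :
    bellman k (‖x + h‖ ^ 2) (y + ‖h‖ ^ 2) + bellman k (‖x - h‖ ^ 2) (y + ‖h‖ ^ 2)
      ≤ 2 * bellman k (‖x‖ ^ 2) y :=
  calc bellman k (‖x + h‖ ^ 2) (y + ‖h‖ ^ 2) + bellman k (‖x - h‖ ^ 2) (y + ‖h‖ ^ 2)
      = ((‖x + h‖ ^ 2) ^ (2 * k) + (‖x - h‖ ^ 2) ^ (2 * k)) / (y + ‖h‖ ^ 2) ^ k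
          - 2 * ((100 * k) ^ (2 * k) * (y + ‖h‖ ^ 2) ^ k) := by unfold bellman; ring
    _ ≤ 2 * (‖x‖ ^ 2 + 5 * (2 * k : ℕ) * ‖h‖ ^ 2) ^ (2 * k) / (y + ‖h‖ ^ 2) ^ k
          - 2 * ((100 * k) ^ (2 * k) * (y + ‖h‖ ^ 2) ^ k) := by
        gcongr
        exact norm_add_sq_pow_add_norm_sub_sq_pow_le x h (by omega)
    _ = 2 * bellman k (‖x‖ ^ 2 + 10 * k * ‖h‖ ^ 2) (y + ‖h‖ ^ 2) := by
        unfold bellman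
        push_cast
        ring
    _ ≤ 2 * bellman k (‖x‖ ^ 2) y := by
        gcongr
        exact bellman_add_le hk (sq_nonneg _) hy (sq_nonneg _)

lemma pow_le_bellman_add (hy : 0 < y) (hk : 1 ≤ k) :
    X ^ k ≤ bellman k X y / (2 * (100 * k) ^ k) + (100 * k) ^ k * y ^ k := by
  have hbellman : bellman k X y / (2 * (100 * k) ^ k) + (100 * k) ^ k * y ^ k
      = ((X ^ k) ^ 2 + ((100 * k) ^ k * y ^ k) ^ 2) / (2 * ((100 * k) ^ k * y ^ k)) := by
    unfold bellman
    field_simp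
    ring
  rw [hbellman, le_div_iff₀ (by positivity)]
  nlinarith [sq_nonneg (X ^ k - (100 * k) ^ k * y ^ k)]

end Bellman

section DyadicSystem

/-- The common value, with the sign convention of `haar1`, of the functions `h_{l-1,m}` on the
`q`-th dyadic interval of length `2^{-M}` contained in their support; for `l = 0` it is `1`. -/
def haarSign (M l q : ℕ) : ℝ := (-1) ^ (q / 2 ^ (M - l))

/-- The position `m` of the function `h_{l-1,m}` whose support contains the `q`-th dyadic interval
of length `2^{-M}`. -/
def haarPos (M l q : ℕ) : ℕ := q / 2 ^ (M - l) / 2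

variable {M l : ℕ}

lemma div_two_pow_succ_sub (hl : l ≤ M) (q : ℕ) : q / 2 ^ (M + 1 - l) = q / 2 / 2 ^ (M - l) := by
  rw [Nat.succ_sub hl, pow_succ', Nat.div_div_eq_div_mul]

lemma haarSign_succ (hl : l ≤ M) (q : ℕ) : haarSign (M + 1) l q = haarSign M l (q / 2) := by
  rw [haarSign, haarSign, div_two_pow_succ_sub hl]

lemma haarPos_succ (hl : l ≤ M) (q : ℕ) : haarPos (M + 1) l q = haarPos M l (q / 2) := by
  rw [haarPos, haarPos, div_two_pow_succ_sub hl]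

lemma haarSign_self (M q : ℕ) : haarSign M M q = (-1) ^ q := by simp [haarSign]

lemma haarPos_self (M q : ℕ) : haarPos M M q = q / 2 := by simp [haarPos]

lemma haarSign_sq (M l q : ℕ) : haarSign M l q ^ 2 = 1 := by
  rw [haarSign, pow_right_comm, neg_one_sq, one_pow]

lemma sum_range_two_mul {E : Type*} [AddCommMonoid E] (g : ℕ → E) (N : ℕ) :
    ∑ q ∈ Finset.range (2 * N), g q = ∑ q ∈ Finset.range N, (g (2 * q) + g (2 * q + 1)) := by
  induction N with
  | zero => simp
  | succ N ih => rw [mul_add_one, Finset.sum_range_succ, Finset.sum_range_succ, ih,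
      Finset.sum_range_succ, add_assoc]

end DyadicSystem

section OneParameter

variable {V : Type*} [NormedAddCommGroup V] {k : ℕ} {δ : ℝ}

/-- The value on the `q`-th dyadic interval of length `2^{-M}` of the squared square function of
the Haar sum with coefficients `v`. -/
def haarSq (v : ℕ → ℕ → V) (M q : ℕ) : ℝ :=
  ∑ l ∈ Finset.range (M + 1), ‖v l (haarPos M l q)‖ ^ 2

lemma haarSq_nonneg (v : ℕ → ℕ → V) (M q : ℕ) : 0 ≤ haarSq v M q :=
  Finset.sum_nonneg fun _ _ => sq_nonneg _

lemma haarSq_succ (v : ℕ → ℕ → V) (M q : ℕ) :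
    haarSq v (M + 1) q = haarSq v M (q / 2) + ‖v (M + 1) (q / 2)‖ ^ 2 := by
  rw [haarSq, Finset.sum_range_succ, haarPos_self, haarSq]
  congr 1
  refine Finset.sum_congr rfl fun l hl => ?_
  rw [haarPos_succ (Finset.mem_range_succ_iff.1 hl)]

variable [InnerProductSpace ℝ V]

/-- The value on the `q`-th dyadic interval of length `2^{-M}` of the vector-valued Haar sum with
coefficient `v l m` at `h_{l-1,m}` for `l ≤ M`. -/
def haarSum (v : ℕ → ℕ → V) (M q : ℕ) : V :=
  ∑ l ∈ Finset.range (M + 1), haarSign M l q • v l (haarPos M l q)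

lemma haarSum_succ (v : ℕ → ℕ → V) (M q : ℕ) :
    haarSum v (M + 1) q = haarSum v M (q / 2) + (-1 : ℝ) ^ q • v (M + 1) (q / 2) := by
  rw [haarSum, Finset.sum_range_succ, haarSign_self, haarPos_self, haarSum]
  congr 1
  refine Finset.sum_congr rfl fun l hl => ?_
  have hl : l ≤ M := Finset.mem_range_succ_iff.1 hl
  rw [haarSign_succ hl, haarPos_succ hl]

lemma haarSum_succ_even (v : ℕ → ℕ → V) (M q : ℕ) :
    haarSum v (M + 1) (2 * q) = haarSum v M q + v (M + 1) q := by
  rw [haarSum_succ, Nat.mul_div_cancel_left q two_pos, (even_two_mul q).neg_one_pow, one_smul]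

lemma haarSum_succ_odd (v : ℕ → ℕ → V) (M q : ℕ) :
    haarSum v (M + 1) (2 * q + 1) = haarSum v M q - v (M + 1) q := by
  rw [haarSum_succ, show (2 * q + 1) / 2 = q by omega, (odd_two_mul_add_one q).neg_one_pow,
    neg_one_smul, sub_eq_add_neg]

lemma bellman_norm_sq_nonpos (hk : 1 ≤ k) (hδ : 0 < δ) (x : V) :
    bellman k (‖x‖ ^ 2) (δ + ‖x‖ ^ 2) ≤ 0 := by
  have hstep := bellman_add_bellman_sub_le hk hδ 0 x
  have hzero : bellman k (‖(0 : V)‖ ^ 2) δ ≤ 0 := by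
    have : 0 ≤ (100 * k : ℝ) ^ (2 * k) * δ ^ k := by positivity
    simpa [bellman, show k ≠ 0 by omega] using this
  rw [zero_add, zero_sub, norm_neg] at hstep
  linarith

lemma sum_bellman_haarSum_nonpos (hk : 1 ≤ k) (hδ : 0 < δ) (v : ℕ → ℕ → V) (M : ℕ) :
    ∑ q ∈ Finset.range (2 ^ M), bellman k (‖haarSum v M q‖ ^ 2) (δ + haarSq v M q) ≤ 0 := by
  induction M with
  | zero => simpa [haarSum, haarSq, haarSign, haarPos] using bellman_norm_sq_nonpos hk hδ (v 0 0)
  | succ M ih =>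
    rw [pow_succ', sum_range_two_mul]
    calc _ ≤ ∑ q ∈ Finset.range (2 ^ M),
          2 * bellman k (‖haarSum v M q‖ ^ 2) (δ + haarSq v M q) := by
          refine Finset.sum_le_sum fun q _ => ?_
          rw [haarSum_succ_even, haarSum_succ_odd, haarSq_succ, haarSq_succ,
            Nat.mul_div_cancel_left q two_pos, show (2 * q + 1) / 2 = q by omega, ← add_assoc]
          exact bellman_add_bellman_sub_le hk
            (add_pos_of_pos_of_nonneg hδ (haarSq_nonneg v M q)) _ _
      _ ≤ 0 := by
          rw [← Finset.mul_sum]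
          linarith

lemma sum_norm_haarSum_pow_le_add (hk : 1 ≤ k) (hδ : 0 < δ) (v : ℕ → ℕ → V) (M : ℕ) :
    ∑ q ∈ Finset.range (2 ^ M), (‖haarSum v M q‖ ^ 2) ^ k
      ≤ (100 * k) ^ k * ∑ q ∈ Finset.range (2 ^ M), (δ + haarSq v M q) ^ k :=
  calc ∑ q ∈ Finset.range (2 ^ M), (‖haarSum v M q‖ ^ 2) ^ k
      ≤ ∑ q ∈ Finset.range (2 ^ M),
          (bellman k (‖haarSum v M q‖ ^ 2) (δ + haarSq v M q) / (2 * (100 * k) ^ k)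
            + (100 * k) ^ k * (δ + haarSq v M q) ^ k) :=
        Finset.sum_le_sum fun q _ =>
          pow_le_bellman_add (add_pos_of_pos_of_nonneg hδ (haarSq_nonneg v M q)) hk
    _ = (∑ q ∈ Finset.range (2 ^ M), bellman k (‖haarSum v M q‖ ^ 2) (δ + haarSq v M q))
            / (2 * (100 * k) ^ k)
          + (100 * k) ^ k * ∑ q ∈ Finset.range (2 ^ M), (δ + haarSq v M q) ^ k := by
        rw [Finset.sum_add_distrib, ← Finset.sum_div, ← Finset.mul_sum]
    _ ≤ (100 * k) ^ k * ∑ q ∈ Finset.range (2 ^ M), (δ + haarSq v M q) ^ k :=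
        add_le_of_nonpos_left
          (div_nonpos_of_nonpos_of_nonneg (sum_bellman_haarSum_nonpos hk hδ v M) (by positivity))

theorem sum_norm_haarSum_pow_le (hk : 1 ≤ k) (v : ℕ → ℕ → V) (M : ℕ) :
    ∑ q ∈ Finset.range (2 ^ M), (‖haarSum v M q‖ ^ 2) ^ k
      ≤ (100 * k) ^ k * ∑ q ∈ Finset.range (2 ^ M), haarSq v M q ^ k := by
  let rhs (δ : ℝ) : ℝ := (100 * k) ^ k * ∑ q ∈ Finset.range (2 ^ M), (δ + haarSq v M q) ^ k
  have hcont : Continuous rhs := by fun_prop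
  have hlim : Filter.Tendsto rhs (nhdsWithin 0 (Set.Ioi 0)) (nhds (rhs 0)) :=
    hcont.continuousAt.tendsto.mono_left nhdsWithin_le_nhds
  simpa [rhs] using ge_of_tendsto hlim <| eventually_mem_nhdsWithin.mono fun δ hδ =>
    sum_norm_haarSum_pow_le_add hk hδ v M

end OneParameter

section Tensor

/-- The `L_{2k}` square function inequality with constant `K` for the system `ε` of functions on a
finite set `Ω`: the coefficient of `ε l` may depend on the parameter `π l ω` (for Haar functions,
the position of the support), and coefficients take values in arbitrary real inner product spaces,
which is what allows tensorization. -/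
def SquareFunctionBound {Λ Ω P : Type*} [Fintype Λ] [Fintype Ω] (ε : Λ → Ω → ℝ) (π : Λ → Ω → P)
    (k : ℕ) (K : ℝ) : Prop :=
  ∀ (V : Type) [NormedAddCommGroup V] [InnerProductSpace ℝ V] (v : Λ → P → V),
    ∑ ω, (‖∑ l, ε l ω • v l (π l ω)‖ ^ 2) ^ k ≤ K * ∑ ω, (∑ l, ‖v l (π l ω)‖ ^ 2) ^ k

lemma squareFunctionBound_haar {k : ℕ} (hk : 1 ≤ k) (M : ℕ) :
    SquareFunctionBound (fun (l : Fin (M + 1)) (q : Fin (2 ^ M)) => haarSign M l q)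
      (fun l q => haarPos M l q) k ((100 * k) ^ k) := by
  intro V _ _ v
  simpa [haarSum, haarSq, Finset.sum_range, Fin.is_le] using
    sum_norm_haarSum_pow_le hk (fun l m => if hl : l < M + 1 then v ⟨l, hl⟩ m else 0) M

namespace SquareFunctionBound

variable {Λ Λ' Ω Ω' P P' : Type*} [Fintype Λ] [Fintype Λ'] [Fintype Ω] [Fintype Ω'] {k : ℕ}
  {K K' : ℝ} {ε : Λ → Ω → ℝ} {π : Λ → Ω → P} {ε' : Λ' → Ω' → ℝ} {π' : Λ' → Ω' → P'}

lemma of_equiv (h : SquareFunctionBound ε π k K) (eΛ : Λ' ≃ Λ) (eΩ : Ω' ≃ Ω) (g : P → P')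
    (hε : ∀ l ω, ε' l ω = ε (eΛ l) (eΩ ω)) (hπ : ∀ l ω, π' l ω = g (π (eΛ l) (eΩ ω))) :
    SquareFunctionBound ε' π' k K := by
  intro V _ _ v
  have hV := h V fun l p => v (eΛ.symm l) (g p)
  simp only [← eΩ.sum_comp, ← eΛ.sum_comp, Equiv.symm_apply_apply] at hV
  simpa only [hε, hπ] using hV

lemma prod {Λ' : Type} [Fintype Λ'] {ε' : Λ' → Ω' → ℝ} {π' : Λ' → Ω' → P'}
    (h : SquareFunctionBound ε π k K) (h' : SquareFunctionBound ε' π' k K') (hK' : 0 ≤ K') :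
    SquareFunctionBound (fun (l : Λ × Λ') (ω : Ω × Ω') => ε l.1 ω.1 * ε' l.2 ω.2)
      (fun l ω => (π l.1 ω.1, π' l.2 ω.2)) k (K * K') := by
  intro V _ _ v
  let fiber (ω : Ω) (l' : Λ') (p' : P') : V := ∑ l, ε l ω • v (l, l') (π l ω, p')
  have hleft (ω : Ω) (ω' : Ω') :
      ∑ l : Λ × Λ', (ε l.1 ω * ε' l.2 ω') • v l (π l.1 ω, π' l.2 ω')
        = ∑ l', ε' l' ω' • fiber ω l' (π' l' ω') := by
    simp only [fiber, Finset.smul_sum, smul_smul, Fintype.sum_prod_type_right, mul_comm]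
  have hfiber (ω : Ω) (ω' : Ω') : ∑ l', ‖fiber ω l' (π' l' ω')‖ ^ 2
      = ‖∑ l, ε l ω • WithLp.toLp 2 fun l' => v (l, l') (π l ω, π' l' ω')‖ ^ 2 := by
    simp [fiber, PiLp.norm_sq_eq_of_L2]
  calc ∑ ω : Ω × Ω',
        (‖∑ l : Λ × Λ', (ε l.1 ω.1 * ε' l.2 ω.2) • v l (π l.1 ω.1, π' l.2 ω.2)‖ ^ 2) ^ k
      = ∑ ω, ∑ ω', (‖∑ l', ε' l' ω' • fiber ω l' (π' l' ω')‖ ^ 2) ^ k := by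
        simp only [Fintype.sum_prod_type, hleft]
    _ ≤ ∑ ω, K' * ∑ ω', (∑ l', ‖fiber ω l' (π' l' ω')‖ ^ 2) ^ k := by
        gcongr with ω
        exact h' V (fiber ω)
    _ = K' * ∑ ω', ∑ ω,
          (‖∑ l, ε l ω • WithLp.toLp 2 fun l' => v (l, l') (π l ω, π' l' ω')‖ ^ 2) ^ k := by
        rw [← Finset.mul_sum, Finset.sum_comm]
        simp only [hfiber]
    _ ≤ K' * ∑ ω', K * ∑ ω,
          (∑ l, ‖WithLp.toLp 2 fun l' => v (l, l') (π l ω, π' l' ω')‖ ^ 2) ^ k := by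
        gcongr with ω'
        exact h (PiLp 2 fun _ : Λ' => V) fun l p => WithLp.toLp 2 fun l' => v (l, l') (p, π' l' ω')
    _ = K * K' * ∑ ω : Ω × Ω', (∑ l : Λ × Λ', ‖v l (π l.1 ω.1, π' l.2 ω.2)‖ ^ 2) ^ k := by
        simp only [PiLp.norm_sq_eq_of_L2, Fintype.sum_prod_type, ← Finset.mul_sum]
        rw [Finset.sum_comm]
        ring

lemma pi {Λ : Type} [Fintype Λ] {ε : Λ → Ω → ℝ} {π : Λ → Ω → P}
    (h : SquareFunctionBound ε π k K) (hK : 0 ≤ K) (s : ℕ) :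
    SquareFunctionBound (fun (l : Fin s → Λ) (ω : Fin s → Ω) => ∏ i, ε (l i) (ω i))
      (fun l ω i => π (l i) (ω i)) k (K ^ s) := by
  induction s with
  | zero =>
    intro V _ _ v
    simp
  | succ s ih =>
    rw [pow_succ']
    refine (h.prod ih (by positivity)).of_equiv (Fin.consEquiv fun _ => Λ).symm
      (Fin.consEquiv fun _ => Ω).symm (fun p => Fin.cons p.1 p.2) (fun l ω => ?_) (fun l ω => ?_)
    · rw [Fin.prod_univ_succ]
      rfl
    · funext i
      cases i using Fin.cases <;> rfl

end SquareFunctionBound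

end Tensor

section Hyperbolic

variable {Λ : Type} {Ω P : Type*} [Fintype Λ] [Fintype Ω] {k s N : ℕ} {K B : ℝ} {ε : Λ → Ω → ℝ}
  {π : Λ → Ω → P} {a : (Fin (s + 1) → Λ) → (Fin (s + 1) → P) → ℝ}

lemma sum_fin_succ_pi {Λ E : Type*} [Fintype Λ] [AddCommMonoid E] (g : (Fin (s + 1) → Λ) → E) :
    ∑ l, g l = ∑ l₀, ∑ l', g (Fin.cons l₀ l') := by
  rw [← (Fin.consEquiv fun _ => Λ).sum_comp, Fintype.sum_prod_type]
  rfl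

lemma map₂_fin_cons {Λ Ω P : Type*} (π : Λ → Ω → P) (l₀ : Λ) (l' : Fin s → Λ) (ω₀ : Ω)
    (ω' : Fin s → Ω) :
    (fun i => π (Fin.cons (α := fun _ => Λ) l₀ l' i) (Fin.cons (α := fun _ => Ω) ω₀ ω' i))
      = Fin.cons (α := fun _ => P) (π l₀ ω₀) fun i => π (l' i) (ω' i) := by
  funext i
  cases i using Fin.cases <;> rfl

lemma sq_sum_le_of_support_card_le {T : Finset Λ} (hT : T.card ≤ N) {x : Λ → ℝ}
    (hx : ∀ l ∉ T, x l = 0) : (∑ l, x l) ^ 2 ≤ N * ∑ l, x l ^ 2 :=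
  calc (∑ l, x l) ^ 2 = (∑ l ∈ T, x l) ^ 2 := by
        rw [Finset.sum_subset T.subset_univ fun l _ => hx l]
    _ ≤ T.card * ∑ l ∈ T, x l ^ 2 := sq_sum_le_card_mul_sum_sq
    _ ≤ N * ∑ l, x l ^ 2 := by
        have hsum : ∑ l ∈ T, x l ^ 2 ≤ ∑ l, x l ^ 2 :=
          Finset.sum_le_sum_of_subset_of_nonneg T.subset_univ fun _ _ _ => sq_nonneg _
        gcongr

lemma sum_sq_sum_fin_cons_le {b : (Fin (s + 1) → Λ) → ℝ} {σ : Λ → ℝ} (hσ : ∀ l, σ l ^ 2 = 1)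
    (hb : ∀ l' : Fin s → Λ, ∃ T : Finset Λ, T.card ≤ N ∧ ∀ l₀ ∉ T, b (Fin.cons l₀ l') = 0) :
    ∑ l', (∑ l₀, σ l₀ * b (Fin.cons l₀ l')) ^ 2 ≤ N * ∑ l, b l ^ 2 := by
  rw [sum_fin_succ_pi, Finset.sum_comm, Finset.mul_sum]
  gcongr with l'
  obtain ⟨T, hT, hzero⟩ := hb l'
  refine (sq_sum_le_of_support_card_le hT fun l₀ hl₀ => ?_).trans_eq ?_
  · rw [hzero l₀ hl₀, mul_zero]
  · simp only [mul_pow, hσ, one_mul]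

-- In the hyperbolic case all but one coordinate of `l` leave at most `N` choices for the remaining
-- one, so the inequality is only iterated in `s` of the `s + 1` coordinates.
theorem SquareFunctionBound.hyperbolic (h : SquareFunctionBound ε π k K) (hK : 0 ≤ K)
    (hε : ∀ l ω, ε l ω ^ 2 = 1)
    (ha : ∀ l' : Fin s → Λ, ∃ T : Finset Λ, T.card ≤ N ∧
      ∀ l₀ ∉ T, ∀ m, a (Fin.cons l₀ l') m = 0)
    (hB : ∀ ω : Fin (s + 1) → Ω, ∑ l, a l (fun i => π (l i) (ω i)) ^ 2 ≤ B) :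
    ∑ ω : Fin (s + 1) → Ω, ((∑ l, (∏ i, ε (l i) (ω i)) * a l fun i => π (l i) (ω i)) ^ 2) ^ k
      ≤ Fintype.card Ω ^ (s + 1) * (K ^ s * (N * B) ^ k) := by
  let slice (ω₀ : Ω) (l' : Fin s → Λ) (p' : Fin s → P) : ℝ :=
    ∑ l₀, ε l₀ ω₀ * a (Fin.cons l₀ l') (Fin.cons (π l₀ ω₀) p')
  have hslice (ω₀ : Ω) (ω' : Fin s → Ω) :
      ∑ l', ‖slice ω₀ l' fun i => π (l' i) (ω' i)‖ ^ 2 ≤ N * B := by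
    simp only [slice, Real.norm_eq_abs, sq_abs, ← map₂_fin_cons π]
    refine (sum_sq_sum_fin_cons_le (hε · ω₀)
      (b := fun l => a l fun i => π (l i) (Fin.cons (α := fun _ => Ω) ω₀ ω' i)) fun l' => ?_).trans
      (mul_le_mul_of_nonneg_left (hB _) N.cast_nonneg)
    obtain ⟨T, hT, hzero⟩ := ha l'
    exact ⟨T, hT, fun l₀ hl₀ => hzero l₀ hl₀ _⟩
  have hfiber (ω₀ : Ω) (ω' : Fin s → Ω) :
      (∑ l, (∏ i, ε (l i) (Fin.cons (α := fun _ => Ω) ω₀ ω' i))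
          * a l fun i => π (l i) (Fin.cons (α := fun _ => Ω) ω₀ ω' i)) ^ 2
        = ‖∑ l', (∏ i, ε (l' i) (ω' i)) • slice ω₀ l' fun i => π (l' i) (ω' i)‖ ^ 2 := by
    rw [Real.norm_eq_abs, sq_abs, sum_fin_succ_pi, Finset.sum_comm]
    simp only [map₂_fin_cons π, Fin.prod_univ_succ, Fin.cons_zero, Fin.cons_succ, slice,
      smul_eq_mul, Finset.mul_sum]
    congr! 3
    ring
  rw [sum_fin_succ_pi]
  simp only [hfiber]
  calc _ ≤ ∑ ω₀ : Ω, K ^ s * ∑ ω' : Fin s → Ω,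
            (∑ l', ‖slice ω₀ l' fun i => π (l' i) (ω' i)‖ ^ 2) ^ k := by
        gcongr with ω₀
        exact h.pi hK s ℝ (slice ω₀)
    _ ≤ ∑ _ : Ω, K ^ s * ∑ _ : Fin s → Ω, (N * B) ^ k := by
        gcongr
        exact hslice _ _
    _ = Fintype.card Ω ^ (s + 1) * (K ^ s * (N * B) ^ k) := by
        simp
        ring

end Hyperbolic

section ExponentialMoments

variable {α : Type*} [MeasurableSpace α] {μ : Measure α} {u f : α → ℝ}

lemma div_six_pow_self_div_factorial_le (k : ℕ) :
    ((k : ℝ) / 6) ^ k / k.factorial ≤ (1 / 2) ^ k :=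
  calc ((k : ℝ) / 6) ^ k / k.factorial = (k : ℝ) ^ k / k.factorial / 6 ^ k := by
        rw [div_pow, div_right_comm]
    _ ≤ Real.exp 1 ^ k / 6 ^ k := by
        gcongr
        rw [← Real.exp_nat_mul, mul_one]
        exact Real.pow_div_factorial_le_exp _ k.cast_nonneg k
    _ ≤ 3 ^ k / 6 ^ k := by gcongr; exact Real.exp_one_lt_three.le
    _ = (1 / 2) ^ k := by rw [← div_pow]; norm_num

lemma ofReal_exp_eq_tsum {x : ℝ} (hx : 0 ≤ x) :
    ENNReal.ofReal (Real.exp x) = ∑' k : ℕ, ENNReal.ofReal (x ^ k / k.factorial) := by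
  have hsum := NormedSpace.expSeries_div_hasSum_exp x
  rw [Real.exp_eq_exp_ℝ, ← hsum.tsum_eq,
    ENNReal.ofReal_tsum_of_nonneg (fun k => by positivity) hsum.summable]

lemma lintegral_exp_le_two (hu : AEMeasurable u μ) (hnonneg : ∀ x, 0 ≤ u x)
    (hmoment : ∀ k : ℕ, ∫⁻ x, ENNReal.ofReal (u x ^ k) ∂μ ≤ ENNReal.ofReal ((k / 6) ^ k)) :
    ∫⁻ x, ENNReal.ofReal (Real.exp (u x)) ∂μ ≤ 2 :=
  calc ∫⁻ x, ENNReal.ofReal (Real.exp (u x)) ∂μ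
      = ∑' k : ℕ, ∫⁻ x, ENNReal.ofReal (u x ^ k / k.factorial) ∂μ := by
        simp only [fun x => ofReal_exp_eq_tsum (hnonneg x)]
        exact lintegral_tsum fun k => ((hu.pow_const k).div_const _).ennreal_ofReal
    _ = ∑' k : ℕ, (∫⁻ x, ENNReal.ofReal (u x ^ k) ∂μ) / ENNReal.ofReal k.factorial := by
        refine tsum_congr fun k => ?_
        have hk : (0 : ℝ) < k.factorial := mod_cast k.factorial_pos
        simp only [ENNReal.ofReal_div_of_pos hk]
        simp only [div_eq_mul_inv]
        exact lintegral_mul_const' _ _ (ENNReal.inv_ne_top.2 (ENNReal.ofReal_pos.2 hk).ne')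
    _ ≤ ∑' k : ℕ, ENNReal.ofReal (1 / 2) ^ k := by
        refine ENNReal.tsum_le_tsum fun k => (ENNReal.div_le_div_right (hmoment k) _).trans ?_
        rw [← ENNReal.ofReal_div_of_pos (by positivity), ← ENNReal.ofReal_pow (by norm_num)]
        exact ENNReal.ofReal_le_ofReal (div_six_pow_self_div_factorial_le k)
    _ = 2 := by
        rw [one_div, ENNReal.ofReal_inv_of_pos two_pos, ENNReal.ofReal_ofNat]
        exact ENNReal.tsum_geometric_two

lemma integrable_exp_and_integral_exp_le_two (hu : AEMeasurable u μ) (hnonneg : ∀ x, 0 ≤ u x)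
    (hmoment : ∀ k : ℕ, ∫⁻ x, ENNReal.ofReal (u x ^ k) ∂μ ≤ ENNReal.ofReal ((k / 6) ^ k)) :
    Integrable (fun x => Real.exp (u x)) μ ∧ ∫ x, Real.exp (u x) ∂μ ≤ 2 := by
  have hexp := lintegral_exp_le_two hu hnonneg hmoment
  have hmeas : AEStronglyMeasurable (fun x => Real.exp (u x)) μ := hu.exp.aestronglyMeasurable
  have hexp_nonneg : 0 ≤ᵐ[μ] fun x => Real.exp (u x) := .of_forall fun x => (Real.exp_pos _).le
  refine ⟨(lintegral_ofReal_ne_top_iff_integrable hmeas hexp_nonneg).1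
    (hexp.trans_lt ENNReal.ofNat_lt_top).ne, ?_⟩
  rw [integral_eq_lintegral_of_nonneg_ae hexp_nonneg hmeas]
  exact ENNReal.toReal_le_of_le_ofReal two_pos.le (by simpa using hexp)

lemma lintegral_abs_rpow_le_of_eLpNorm_le {p r : ℝ} (hp : 0 < p) (hr : 0 ≤ r)
    (h : eLpNorm f (ENNReal.ofReal p) μ ≤ ENNReal.ofReal r) :
    ∫⁻ x, ENNReal.ofReal (|f x| ^ p) ∂μ ≤ ENNReal.ofReal (r ^ p) := by
  rw [eLpNorm_eq_lintegral_rpow_enorm_toReal (by simpa using hp) ENNReal.ofReal_ne_top,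
    ENNReal.toReal_ofReal hp.le, one_div, ENNReal.rpow_inv_le_iff hp,
    ENNReal.ofReal_rpow_of_nonneg hr hp.le] at h
  simpa only [← ENNReal.ofReal_rpow_of_nonneg (abs_nonneg _) hp.le, ← Real.enorm_eq_ofReal_abs]
    using h

end ExponentialMoments

section Orlicz

namespace IsYoungExp

variable {β : ℝ} {ψ : ℝ → ℝ}

lemma nonneg (hψ : IsYoungExp β ψ) {x : ℝ} (hx : 0 ≤ x) : 0 ≤ ψ x := by
  rcases hx.eq_or_lt with rfl | hx
  · exact hψ.2.1.ge
  · exact (hψ.2.2.1 x hx).le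

lemma map_mul_le (hψ : IsYoungExp β ψ) {r x : ℝ} (hr : 0 ≤ r) (hr' : r ≤ 1) (hx : 0 ≤ x) :
    ψ (r * x) ≤ r * ψ x := by
  simpa [hψ.2.1] using hψ.1.2 (x := x) (y := 0) hx (by simp) hr (sub_nonneg.2 hr') (by ring)

lemma exists_le_add_exp (hψ : IsYoungExp β ψ) :
    ∃ D, 0 ≤ D ∧ ∀ x, 0 ≤ x → ψ x ≤ D + Real.exp (x ^ β) := by
  obtain ⟨x₀, hx₀⟩ := hψ.2.2.2
  have hD : 0 ≤ ψ (max x₀ 0) := hψ.nonneg (le_max_right x₀ 0)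
  refine ⟨ψ (max x₀ 0), hD, fun x hx => ?_⟩
  rcases le_or_gt (max x₀ 0) x with hlarge | hsmall
  · rw [hx₀ x ((le_max_left x₀ 0).trans hlarge)]
    linarith
  · have hmax : 0 < max x₀ 0 := hx.trans_lt hsmall
    have hr : x / max x₀ 0 ≤ 1 := (div_le_one hmax).2 hsmall.le
    have hscale := hψ.map_mul_le (by positivity) hr hmax.le
    rw [div_mul_cancel₀ _ hmax.ne'] at hscale
    linarith [mul_le_of_le_one_left hD hr, Real.exp_pos (x ^ β)]

end IsYoungExp

lemma restrict_unitCubeIco (d : ℕ) :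
    volume.restrict (unitCubeIco d) = volume.restrict (unitCube d) := by
  refine Measure.restrict_congr_set ?_
  rw [unitCube, Set.pi_univ_Icc]
  exact Measure.univ_pi_Ico_ae_eq_Icc

instance isProbabilityMeasure_restrict_unitCube (d : ℕ) :
    IsProbabilityMeasure (volume.restrict (unitCube d)) :=
  ⟨by rw [Measure.restrict_apply_univ, unitCube, volume_pi_pi]; simp⟩

variable {d : ℕ} {β A : ℝ} {ψ : ℝ → ℝ} {f : (Fin d → ℝ) → ℝ}

lemma eLpNorm_le_of_supLp_le (hA : supLp d β f ≤ ENNReal.ofReal A) {p : ℝ} (hp : 1 < p) :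
    eLpNorm f (ENNReal.ofReal p) (volume.restrict (unitCube d))
      ≤ ENNReal.ofReal (p ^ (1 / β) * A) := by
  have hp₀ : 0 < p := one_pos.trans hp
  have h := (le_iSup (fun p : {p : ℝ // 1 < p} => ENNReal.ofReal ((p : ℝ) ^ (-(1 / β))) *
    eLpNorm f (ENNReal.ofReal (p : ℝ)) (volume.restrict (unitCube d))) ⟨p, hp⟩).trans hA
  rw [ENNReal.ofReal_mul (by positivity)]
  calc eLpNorm f (ENNReal.ofReal p) (volume.restrict (unitCube d))
      = ENNReal.ofReal (p ^ (1 / β)) * (ENNReal.ofReal (p ^ (-(1 / β))) *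
          eLpNorm f (ENNReal.ofReal p) (volume.restrict (unitCube d))) := by
        rw [← mul_assoc, ← ENNReal.ofReal_mul (by positivity), ← Real.rpow_add hp₀, add_neg_cancel,
          Real.rpow_zero, ENNReal.ofReal_one, one_mul]
    _ ≤ ENNReal.ofReal (p ^ (1 / β)) * ENNReal.ofReal A := by gcongr

-- The exponent `kβ` may be less than `1`, so it is first raised to `kβ + 1`.
lemma lintegral_pow_le_of_supLp_le (hβ : 0 < β) (hA₀ : 0 < A)
    (hf : AEMeasurable f (volume.restrict (unitCube d)))
    (hA : supLp d β f ≤ ENNReal.ofReal A) (k : ℕ) :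
    ∫⁻ x in unitCube d, ENNReal.ofReal (((|f x| / ((6 * (β + 1)) ^ (1 / β) * A)) ^ β) ^ k)
      ≤ ENNReal.ofReal ((k / 6) ^ k) := by
  rcases k.eq_zero_or_pos with rfl | hk
  · simp
  have hk' : (1 : ℝ) ≤ k := mod_cast hk
  set c := (6 * (β + 1)) ^ (1 / β) * A
  have hc : 0 < c := by positivity
  set p := k * β
  have hp : 0 < p := by positivity
  have hLp : eLpNorm f (ENNReal.ofReal p) (volume.restrict (unitCube d))
      ≤ ENNReal.ofReal ((k * (β + 1)) ^ (1 / β) * A) := by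
    refine (eLpNorm_le_eLpNorm_of_exponent_le (ENNReal.ofReal_le_ofReal (le_add_of_nonneg_right
      zero_le_one)) hf.aestronglyMeasurable).trans
      ((eLpNorm_le_of_supLp_le hA (lt_add_of_pos_left 1 hp)).trans ?_)
    gcongr
    linarith
  calc ∫⁻ x in unitCube d, ENNReal.ofReal (((|f x| / c) ^ β) ^ k)
      = ∫⁻ x in unitCube d, ENNReal.ofReal (|f x| ^ p) * ENNReal.ofReal ((c ^ p)⁻¹) := by
        refine lintegral_congr fun x => ?_
        rw [← ENNReal.ofReal_mul (by positivity), ← div_eq_mul_inv, ← Real.div_rpow (abs_nonneg _)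
          hc.le, ← Real.rpow_mul_natCast (by positivity), mul_comm β]
    _ ≤ ENNReal.ofReal (((k * (β + 1)) ^ (1 / β) * A) ^ p) * ENNReal.ofReal ((c ^ p)⁻¹) := by
        rw [lintegral_mul_const' _ _ ENNReal.ofReal_ne_top]
        gcongr
        exact lintegral_abs_rpow_le_of_eLpNorm_le hp (by positivity) hLp
    _ = ENNReal.ofReal ((k / 6) ^ k) := by
        rw [← ENNReal.ofReal_mul (by positivity), ← div_eq_mul_inv, ← Real.div_rpow (by positivity)
          hc.le, mul_div_mul_right _ _ hA₀.ne', ← Real.div_rpow (by positivity) (by positivity),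
          ← Real.rpow_mul (by positivity), mul_div_mul_right _ _ (by positivity),
          show 1 / β * p = k by simp only [p]; field_simp, Real.rpow_natCast]

lemma orliczNorm_le_of_supLp_le (hβ : 0 < β) (hψ : IsYoungExp β ψ) {D : ℝ} (hD : 0 ≤ D)
    (hψD : ∀ x, 0 ≤ x → ψ x ≤ D + Real.exp (x ^ β)) (hA₀ : 0 < A)
    (hf : AEMeasurable f (volume.restrict (unitCube d)))
    (hA : supLp d β f ≤ ENNReal.ofReal A) :
    orliczNorm d ψ f ≤ ENNReal.ofReal ((D + 2) * (6 * (β + 1)) ^ (1 / β) * A) := by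
  set μ := volume.restrict (unitCube d)
  set c := (6 * (β + 1)) ^ (1 / β) * A
  have hc : 0 < c := by positivity
  let u (x : Fin d → ℝ) : ℝ := (|f x| / c) ^ β
  have hu : AEMeasurable u μ := ((hf.abs).div_const c).pow_const β
  obtain ⟨hint, hexp⟩ := integrable_exp_and_integral_exp_le_two hu (fun x => by positivity)
    (lintegral_pow_le_of_supLp_le hβ hA₀ hf hA)
  have hψu (x : Fin d → ℝ) : ψ (|f x| / ((D + 2) * c)) ≤ (D + 2)⁻¹ * (D + Real.exp (u x)) := by
    rw [mul_comm, ← div_div, div_eq_inv_mul]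
    refine (hψ.map_mul_le (by positivity) (inv_le_one_of_one_le₀ (by linarith))
      (by positivity)).trans ?_
    gcongr
    exact hψD _ (by positivity)
  rw [mul_assoc]
  refine iInf_le_of_le ⟨(D + 2) * c, mul_pos (by positivity) hc, ?_⟩ le_rfl
  rw [restrict_unitCubeIco]
  calc ∫ x, ψ (|f x| / ((D + 2) * c)) ∂μ ≤ ∫ x, (D + 2)⁻¹ * (D + Real.exp (u x)) ∂μ :=
        integral_mono_of_nonneg (.of_forall fun x => hψ.nonneg (by positivity))
          (((integrable_const D).add hint).const_mul _) (.of_forall hψu)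
    _ = (D + 2)⁻¹ * (D + ∫ x, Real.exp (u x) ∂μ) := by
        rw [integral_const_mul, integral_add (integrable_const D) hint]
        simp
    _ ≤ (D + 2)⁻¹ * (D + 2) := by gcongr
    _ = 1 := inv_mul_cancel₀ (by positivity)

lemma le_ofReal_mul_of_forall_le_ofReal {C : ℝ} (hC : 0 < C) {x y : ℝ≥0∞}
    (h : ∀ A : ℝ, 0 < A → x ≤ ENNReal.ofReal A → y ≤ ENNReal.ofReal (C * A)) :
    y ≤ ENNReal.ofReal C * x := by
  have hC' : ENNReal.ofReal C ≠ 0 := by simpa using hC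
  rw [mul_comm, ← ENNReal.div_le_iff_le_mul (.inl hC') (.inl ENNReal.ofReal_ne_top)]
  refine le_of_forall_gt_imp_ge_of_dense fun a hxa => ?_
  rcases eq_or_ne a ⊤ with rfl | ha
  · exact le_top
  rw [ENNReal.div_le_iff_le_mul (.inl hC') (.inl ENNReal.ofReal_ne_top), mul_comm,
    ← ENNReal.ofReal_toReal ha, ← ENNReal.ofReal_mul hC.le]
  exact h _ (ENNReal.toReal_pos (bot_le.trans_lt hxa).ne' ha)
    (by simpa only [ENNReal.ofReal_toReal ha] using hxa.le)

theorem IsYoungExp.exists_orliczNorm_le_supLp (hβ : 0 < β) (hψ : IsYoungExp β ψ) (d : ℕ) :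
    ∃ C : ℝ, 0 < C ∧ ∀ f : (Fin d → ℝ) → ℝ, AEMeasurable f (volume.restrict (unitCube d)) →
      orliczNorm d ψ f ≤ ENNReal.ofReal C * supLp d β f := by
  obtain ⟨D, hD, hψD⟩ := hψ.exists_le_add_exp
  have hC : 0 < (D + 2) * (6 * (β + 1)) ^ (1 / β) := by positivity
  exact ⟨_, hC, fun f hf => le_ofReal_mul_of_forall_le_ofReal hC fun A hA₀ hA =>
    orliczNorm_le_of_supLp_le hβ hψ hD hψD hA₀ hf hA⟩

end Orlicz

section DyadicGrid

/-- The value of `h_{l-1,m}` on the `q`-th dyadic interval of length `2^{-M}`, for `l ≤ M`. -/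
def gridHaar (M l m q : ℕ) : ℝ := if haarPos M l q = m then haarSign M l q else 0

/-- The index of the dyadic interval of length `2^{-M}` containing `x ∈ [0,1)`; for other `x` the
index is reduced modulo `2^M`. -/
def gridIndex (M : ℕ) (x : ℝ) : Fin (2 ^ M) := Fin.ofNat (2 ^ M) ⌊2 ^ M * x⌋₊

variable {M l l' m m' r : ℕ} {x : ℝ}

lemma gridHaar_succ (hl : l ≤ M) (m q : ℕ) :
    gridHaar (M + 1) l m q = gridHaar M l m (q / 2) := by
  rw [gridHaar, gridHaar, haarPos_succ hl, haarSign_succ hl]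

lemma gridHaar_self (M m q : ℕ) : gridHaar M M m q = if q / 2 = m then (-1) ^ q else 0 := by
  rw [gridHaar, haarPos_self, haarSign_self]

lemma gridHaar_self_even (M m q : ℕ) :
    gridHaar (M + 1) (M + 1) m (2 * q) = if q = m then 1 else 0 := by
  simp [gridHaar_self]

lemma gridHaar_self_odd (M m q : ℕ) :
    gridHaar (M + 1) (M + 1) m (2 * q + 1) = -gridHaar (M + 1) (M + 1) m (2 * q) := by
  have hhalf : (2 * q + 1) / 2 = q := by omega
  simp only [gridHaar_self, hhalf, Nat.mul_div_cancel_left q two_pos, pow_succ]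
  split_ifs <;> simp

lemma sum_gridHaar_mul_gridHaar (hl : l ≤ M) (hl' : l' ≤ M) (hm : m < 2 ^ (l - 1)) (m' : ℕ) :
    ∑ q ∈ Finset.range (2 ^ M), gridHaar M l m q * gridHaar M l' m' q
      = if l = l' ∧ m = m' then 2 ^ M / 2 ^ (l - 1) else 0 := by
  induction M with
  | zero =>
    obtain ⟨rfl, rfl⟩ : l = 0 ∧ l' = 0 := by omega
    obtain rfl : m = 0 := by simpa using hm
    simp [gridHaar_self]
  | succ M ih =>
    have hhalf (q : ℕ) : (2 * q + 1) / 2 = q := by omega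
    rw [pow_succ', sum_range_two_mul]
    rcases Nat.le_succ_iff.1 hl with hl | rfl <;> rcases Nat.le_succ_iff.1 hl' with hl' | rfl
    · simp only [gridHaar_succ hl, gridHaar_succ hl', hhalf, Nat.mul_div_cancel_left _ two_pos,
        ← two_mul, ← Finset.mul_sum, ih hl hl', mul_ite, mul_zero, pow_succ' (2 : ℝ), mul_div_assoc]
    · simp [gridHaar_succ hl, gridHaar_self_odd, hhalf, show l ≠ M + 1 by omega]
    · simp [gridHaar_succ hl', gridHaar_self_odd, hhalf, show M + 1 ≠ l' by omega]
    · simp only [gridHaar_self_odd, neg_mul_neg, ← two_mul, gridHaar_self_even, mul_ite, mul_one,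
        mul_zero, Finset.sum_ite_eq', Finset.mem_range, true_and, pow_succ' (2 : ℝ),
        Nat.succ_eq_add_one, Nat.add_sub_cancel] at hm ⊢
      rw [mul_div_cancel_right₀ _ (by positivity)]
      grind

lemma floor_two_pow_mul_div (hr : r ≤ M) (x : ℝ) :
    ⌊2 ^ M * x⌋₊ / 2 ^ (M - r) = ⌊2 ^ r * x⌋₊ := by
  rw [← Nat.floor_div_natCast]
  congr 1
  push_cast
  rw [div_eq_iff (by positivity), mul_right_comm, ← pow_add, Nat.add_sub_cancel' hr]

lemma haar1_natCast (j m : ℕ) (hx : 0 ≤ x) :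
    haar1 j m x
      = if ⌊2 ^ (j + 1) * x⌋₊ / 2 = m then (-1) ^ ⌊2 ^ (j + 1) * x⌋₊ else 0 := by
  have hj : (0 : ℝ) < 2 ^ j := by positivity
  have hleft : ((m : ℝ) / 2 ^ j ≤ x ∧ x < ((m : ℝ) + 1 / 2) / 2 ^ j)
      ↔ ⌊2 ^ (j + 1) * x⌋₊ = 2 * m := by
    rw [Nat.floor_eq_iff (by positivity), div_le_iff₀ hj, lt_div_iff₀ hj, pow_succ]
    push_cast
    constructor <;> rintro ⟨h, h'⟩ <;> constructor <;> linarith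
  have hright : (((m : ℝ) + 1 / 2) / 2 ^ j ≤ x ∧ x < ((m : ℝ) + 1) / 2 ^ j)
      ↔ ⌊2 ^ (j + 1) * x⌋₊ = 2 * m + 1 := by
    rw [Nat.floor_eq_iff (by positivity), div_le_iff₀ hj, lt_div_iff₀ hj, pow_succ]
    push_cast
    constructor <;> rintro ⟨h, h'⟩ <;> constructor <;> linarith
  rw [haar1, if_neg (by omega), Int.toNat_natCast]
  simp only [hleft, hright]
  generalize ⌊2 ^ (j + 1) * x⌋₊ = t
  obtain ⟨u, rfl | rfl⟩ := t.even_or_odd'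
  · have : 2 * u ≠ 2 * m + 1 := by omega
    simp [pow_mul, this]
  · have : 2 * u + 1 ≠ 2 * m := by omega
    have : (2 * u + 1) / 2 = u := by omega
    simp [pow_succ, pow_mul, *]

lemma val_gridIndex (M : ℕ) (hx : x ∈ Set.Ico 0 1) : (gridIndex M x : ℕ) = ⌊2 ^ M * x⌋₊ := by
  refine Nat.mod_eq_of_lt ((Nat.floor_lt (mul_nonneg (by positivity) hx.1)).2 ?_)
  push_cast
  exact mul_lt_of_lt_one_right (by positivity) hx.2

lemma haarPos_gridIndex (hl : l ≤ M) (hx : x ∈ Set.Ico 0 1) :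
    haarPos M l (gridIndex M x) = ⌊2 ^ (l - 1) * x⌋₊ := by
  rw [haarPos, val_gridIndex M hx, floor_two_pow_mul_div hl]
  rcases l with _ | l
  · simp [Nat.floor_eq_zero.2 hx.2]
  · simpa using floor_two_pow_mul_div l.le_succ x

lemma haar1_sub_one (hl : l ≤ M) (hm : m < 2 ^ (l - 1)) (hx : x ∈ Set.Ico 0 1) :
    haar1 (l - 1) m x = gridHaar M l m (gridIndex M x) := by
  rw [gridHaar, haarPos, haarSign, val_gridIndex M hx, floor_two_pow_mul_div hl]
  rcases l with _ | l
  · obtain rfl : m = 0 := by simpa using hm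
    simp [haar1, hx.1, hx.2, Nat.floor_eq_zero.2 hx.2]
  · simpa using haar1_natCast l m hx.1

lemma measurable_gridIndex (M : ℕ) : Measurable (gridIndex M) :=
  measurable_from_top.comp (Nat.measurable_floor.comp (measurable_const_mul _))

lemma gridIndex_preimage_inter_Ico (M : ℕ) (q : Fin (2 ^ M)) :
    gridIndex M ⁻¹' {q} ∩ Set.Ico 0 1 = Set.Ico ((q : ℝ) / 2 ^ M) ((q + 1) / 2 ^ M) := by
  have hM : (0 : ℝ) < 2 ^ M := by positivity
  have hq : (q : ℝ) + 1 ≤ 2 ^ M := mod_cast q.2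
  have hsub : Set.Ico ((q : ℝ) / 2 ^ M) ((q + 1) / 2 ^ M) ⊆ Set.Ico 0 1 :=
    Set.Ico_subset_Ico (by positivity) ((div_le_one hM).2 hq)
  ext x
  rw [Set.mem_inter_iff, and_comm, ← and_iff_right_of_imp (hsub ·), and_congr_right_iff]
  intro hx
  rw [Set.mem_preimage, Set.mem_singleton_iff, Fin.ext_iff, val_gridIndex M hx,
    Nat.floor_eq_iff (mul_nonneg hM.le hx.1), Set.mem_Ico, div_le_iff₀' hM, lt_div_iff₀' hM]

lemma measurePreserving_gridIndex (M : ℕ) :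
    MeasurePreserving (gridIndex M) (volume.restrict (Set.Icc 0 1))
      (ProbabilityTheory.uniformOn Set.univ) := by
  refine ⟨measurable_gridIndex M, Measure.ext_iff_singleton.2 fun q => ?_⟩
  rw [← Measure.restrict_congr_set Ico_ae_eq_Icc,
    Measure.map_apply (measurable_gridIndex M) (measurableSet_singleton q),
    Measure.restrict_apply (measurable_gridIndex M (measurableSet_singleton q)),
    gridIndex_preimage_inter_Ico, Real.volume_Ico, ProbabilityTheory.uniformOn_univ,
    Measure.count_singleton, Fintype.card_fin, ← sub_div, add_sub_cancel_left,
    ENNReal.ofReal_div_of_pos (by positivity), ENNReal.ofReal_one]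
  simp

variable {d : ℕ}

/-- The index of the cell of the dyadic grid of mesh `2^{-M}` containing `x ∈ [0,1)^d`. -/
def gridCell (M : ℕ) (x : Fin d → ℝ) : Fin d → Fin (2 ^ M) := fun i => gridIndex M (x i)

/-- The uniform probability measure on the cells of the dyadic grid of mesh `2^{-M}`. -/
abbrev gridMeasure (d M : ℕ) : Measure (Fin d → Fin (2 ^ M)) :=
  Measure.pi fun _ => ProbabilityTheory.uniformOn Set.univ

lemma measurePreserving_gridCell (d M : ℕ) :
    MeasurePreserving (gridCell M) (volume.restrict (unitCube d)) (gridMeasure d M) := by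
  rw [unitCube, volume_pi, Measure.restrict_pi_pi]
  exact measurePreserving_pi _ _ fun _ => measurePreserving_gridIndex M

lemma gridMeasure_singleton (q : Fin d → Fin (2 ^ M)) :
    gridMeasure d M {q} = ((2 : ℝ≥0∞) ^ (M * d))⁻¹ := by
  simp [gridMeasure, Measure.pi_singleton, ProbabilityTheory.uniformOn_univ, pow_mul,
    ENNReal.inv_pow]

lemma integral_gridMeasure (g : (Fin d → Fin (2 ^ M)) → ℝ) :
    ∫ q, g q ∂gridMeasure d M = (2 ^ (M * d))⁻¹ * ∑ q, g q := by
  rw [integral_fintype .of_finite, Finset.mul_sum]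
  simp only [Measure.real, gridMeasure_singleton]
  simp

lemma ae_mem_unitCubeIco (d : ℕ) : ∀ᵐ x ∂volume.restrict (unitCube d), x ∈ unitCubeIco d := by
  rw [← restrict_unitCubeIco]
  exact ae_restrict_mem (MeasurableSet.univ_pi fun _ => measurableSet_Ico)

lemma forall_of_ae_gridCell {P : (Fin d → Fin (2 ^ M)) → Prop}
    (h : ∀ᵐ x ∂volume.restrict (unitCube d), P (gridCell M x)) (q : Fin d → Fin (2 ^ M)) : P q := by
  rw [← ae_map_iff (measurePreserving_gridCell d M).aemeasurable (Set.toFinite _).measurableSet,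
    (measurePreserving_gridCell d M).map_eq, ae_iff_of_countable] at h
  refine h q ?_
  rw [gridMeasure_singleton]
  simp

section ConstantOnCells

variable {f : (Fin d → ℝ) → ℝ} {g : (Fin d → Fin (2 ^ M)) → ℝ}

lemma ae_eq_comp_gridCell (hfg : ∀ x ∈ unitCubeIco d, f x = g (gridCell M x)) :
    f =ᵐ[volume.restrict (unitCube d)] g ∘ gridCell M :=
  (ae_mem_unitCubeIco d).mono hfg

lemma aemeasurable_of_eq_comp_gridCell (hfg : ∀ x ∈ unitCubeIco d, f x = g (gridCell M x)) :
    AEMeasurable f (volume.restrict (unitCube d)) :=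
  ((measurable_of_finite g).comp (measurePreserving_gridCell d M).measurable).aemeasurable.congr
    (ae_eq_comp_gridCell hfg).symm

lemma setIntegral_unitCube_eq_sum (hfg : ∀ x ∈ unitCubeIco d, f x = g (gridCell M x)) :
    ∫ x in unitCube d, f x = (2 ^ (M * d))⁻¹ * ∑ q, g q := by
  have hmap := measurePreserving_gridCell d M
  rw [integral_congr_ae (ae_eq_comp_gridCell hfg), ← integral_gridMeasure, ← hmap.map_eq,
    integral_map hmap.aemeasurable (measurable_of_finite g).aestronglyMeasurable]
  rfl

lemma eLpNorm_unitCube_eq (hfg : ∀ x ∈ unitCubeIco d, f x = g (gridCell M x)) {k : ℕ}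
    (hk : 1 ≤ k) :
    eLpNorm f (ENNReal.ofReal (2 * k)) (volume.restrict (unitCube d))
      = ENNReal.ofReal (((2 ^ (M * d))⁻¹ * ∑ q, (g q ^ 2) ^ k) ^ (2 * k : ℝ)⁻¹) := by
  have hk' : (0 : ℝ) < 2 * k := by positivity
  rw [eLpNorm_congr_ae (ae_eq_comp_gridCell hfg), eLpNorm_comp_measurePreserving
    (measurable_of_finite g).aestronglyMeasurable (measurePreserving_gridCell d M),
    MemLp.eLpNorm_eq_integral_rpow_norm (ENNReal.ofReal_pos.2 hk').ne' ENNReal.ofReal_ne_top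
      .of_discrete,
    integral_gridMeasure, ENNReal.toReal_ofReal hk'.le]
  simp only [← Nat.cast_ofNat (R := ℝ), ← Nat.cast_mul, Real.rpow_natCast, pow_mul,
    Real.norm_eq_abs, sq_abs]

end ConstantOnCells

end DyadicGrid

section HaarExpansion

variable {d M : ℕ} {j j' : Fin d → ℤ} {m m' : Fin d → ℕ}
  {F : Finset ((Fin d → ℤ) × (Fin d → ℕ))} {c : (Fin d → ℤ) × (Fin d → ℕ) → ℝ} {x : Fin d → ℝ}

/-- The indices `(j,m)` with `j ∈ {-1,…,M-1}^d` and `m ∈ 𝔻_j`, that is, those of the Haar functions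
which are constant on the cells of the dyadic grid of mesh `2^{-M}`. -/
def IsHaarIndex (M : ℕ) (j : Fin d → ℤ) (m : Fin d → ℕ) : Prop :=
  ∀ i, -1 ≤ j i ∧ j i < M ∧ m i < 2 ^ (j i).toNat

lemma isHaarIndex_jnorm_add_one (hj : ∀ i, -1 ≤ j i) (hm : ∀ i, m i < 2 ^ (j i).toNat) :
    IsHaarIndex (jnorm d j + 1) j m := fun i => by
  have hle : (j i).toNat ≤ jnorm d j :=
    Finset.single_le_sum (f := fun i => (j i).toNat) (fun _ _ => Nat.zero_le _) (Finset.mem_univ i)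
  exact ⟨hj i, by omega, hm i⟩

/-- The value of `h_{j,m}` on a cell of the dyadic grid of mesh `2^{-M}`. -/
def gridHaarFn (M : ℕ) (j : Fin d → ℤ) (m : Fin d → ℕ) (q : Fin d → Fin (2 ^ M)) : ℝ :=
  ∏ i, gridHaar M (j i + 1).toNat (m i) (q i)

lemma haarFn_eq_gridHaarFn (h : IsHaarIndex M j m) (hx : x ∈ unitCubeIco d) :
    haarFn d j m x = gridHaarFn M j m (gridCell M x) := by
  refine Finset.prod_congr rfl fun i _ => ?_
  obtain ⟨hj, hjM, hm⟩ := h i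
  have hpred : (j i + 1).toNat - 1 = (j i).toNat := by omega
  rw [gridCell, ← haar1_sub_one (by omega) (by rwa [hpred]) (hx i trivial)]
  congr 1
  omega

lemma sum_gridHaarFn_mul_gridHaarFn (h : IsHaarIndex M j m) (h' : IsHaarIndex M j' m') :
    ∑ q, gridHaarFn M j m q * gridHaarFn M j' m' q
      = if j = j' ∧ m = m' then 2 ^ (M * d) / 2 ^ jnorm d j else 0 := by
  have hsum (i : Fin d) : ∑ q : Fin (2 ^ M), gridHaar M (j i + 1).toNat (m i) q
      * gridHaar M (j' i + 1).toNat (m' i) q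
        = if j i = j' i ∧ m i = m' i then 2 ^ M / 2 ^ (j i).toNat else 0 := by
    obtain ⟨hj, hjM, hm⟩ := h i
    obtain ⟨hj', hjM', -⟩ := h' i
    have hpred : (j i + 1).toNat - 1 = (j i).toNat := by omega
    rw [Fin.sum_univ_eq_sum_range fun q => gridHaar M (j i + 1).toNat (m i) q
      * gridHaar M (j' i + 1).toNat (m' i) q, sum_gridHaar_mul_gridHaar (by omega) (by omega)
      (by rwa [hpred]), hpred]
    congr! 2
    omega
  simp only [gridHaarFn, ← Finset.prod_mul_distrib]
  rw [← Fintype.piFinset_univ, ← Finset.prod_univ_sum (fun _ => Finset.univ)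
    fun i (q : Fin (2 ^ M)) => gridHaar M (j i + 1).toNat (m i) q
      * gridHaar M (j' i + 1).toNat (m' i) q, Finset.prod_congr rfl fun i _ => hsum i,
    Fintype.prod_ite_zero, Finset.prod_div_distrib, Finset.prod_const, Finset.card_univ,
    Fintype.card_fin, ← pow_mul, Finset.prod_pow_eq_pow_sum, jnorm]
  simp only [forall_and, funext_iff]

/-- The linear combination of Haar functions with coefficients `c` indexed by `F`. -/
def haarExpansion (F : Finset ((Fin d → ℤ) × (Fin d → ℕ))) (c : (Fin d → ℤ) × (Fin d → ℕ) → ℝ)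
    (x : Fin d → ℝ) : ℝ :=
  ∑ p ∈ F, c p * haarFn d p.1 p.2 x

/-- The values of `haarExpansion F c` on the cells of the dyadic grid of mesh `2^{-M}`. -/
def gridExpansion (M : ℕ) (F : Finset ((Fin d → ℤ) × (Fin d → ℕ)))
    (c : (Fin d → ℤ) × (Fin d → ℕ) → ℝ) (q : Fin d → Fin (2 ^ M)) : ℝ :=
  ∑ p ∈ F, c p * gridHaarFn M p.1 p.2 q

lemma haarExpansion_eq_gridExpansion (hF : ∀ p ∈ F, IsHaarIndex M p.1 p.2)
    (x : Fin d → ℝ) (hx : x ∈ unitCubeIco d) :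
    haarExpansion F c x = gridExpansion M F c (gridCell M x) :=
  Finset.sum_congr rfl fun p hp => by rw [haarFn_eq_gridHaarFn (hF p hp) hx]

lemma haarCoeff_haarExpansion (hF : ∀ p ∈ F, IsHaarIndex M p.1 p.2)
    {p : (Fin d → ℤ) × (Fin d → ℕ)} (hp : p ∈ F) :
    haarCoeff d (haarExpansion F c) p.1 p.2 = c p / 2 ^ jnorm d p.1 := by
  have hsum : ∑ q, gridExpansion M F c q * gridHaarFn M p.1 p.2 q
      = c p * (2 ^ (M * d) / 2 ^ jnorm d p.1) := by
    simp only [gridExpansion, Finset.sum_mul, mul_assoc]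
    rw [Finset.sum_comm, Finset.sum_eq_single_of_mem p hp]
    · rw [← Finset.mul_sum, sum_gridHaarFn_mul_gridHaarFn (hF p hp) (hF p hp), if_pos ⟨rfl, rfl⟩]
    · intro p' hp' hne
      rw [← Finset.mul_sum, sum_gridHaarFn_mul_gridHaarFn (hF p' hp') (hF p hp),
        if_neg fun h => hne (Prod.ext h.1 h.2), mul_zero]
  rw [haarCoeff, setIntegral_unitCube_eq_sum (M := M)
    (g := fun q => gridExpansion M F c q * gridHaarFn M p.1 p.2 q) fun x hx => by
      rw [haarExpansion_eq_gridExpansion hF x hx, haarFn_eq_gridHaarFn (hF p hp) hx], hsum]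
  field_simp

/-- The index `j` with `j_i = l_i - 1`, where the levels `l_i` are counted from `0` as in
`haarSign` and `haarPos`. -/
def haarIndex (l : Fin d → Fin (M + 1)) : Fin d → ℤ := fun i => (l i : ℤ) - 1

/-- The coefficients of `haarExpansion F c` as an array indexed by levels and positions. -/
def coeffArray (F : Finset ((Fin d → ℤ) × (Fin d → ℕ))) (c : (Fin d → ℤ) × (Fin d → ℕ) → ℝ)
    (l : Fin d → Fin (M + 1)) (m : Fin d → ℕ) : ℝ :=
  (F : Set ((Fin d → ℤ) × (Fin d → ℕ))).indicator c (haarIndex l, m)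

lemma haarIndex_injective : Function.Injective (haarIndex (d := d) (M := M)) := by
  intro l l' h
  funext i
  have := congrFun h i
  simp only [haarIndex] at this
  omega

lemma exists_haarIndex_eq (h : IsHaarIndex M j m) : ∃ l : Fin d → Fin (M + 1), haarIndex l = j := by
  refine ⟨fun i => ⟨(j i + 1).toNat, ?_⟩, funext fun i => ?_⟩ <;> have := h i
  · omega
  · simp only [haarIndex]
    omega

lemma toNat_haarIndex (l : Fin d → Fin (M + 1)) (i : Fin d) :
    (haarIndex l i).toNat = l i - 1 := by
  simp only [haarIndex]
  omega

lemma gridHaarFn_haarIndex (l : Fin d → Fin (M + 1)) (m : Fin d → ℕ) (q : Fin d → Fin (2 ^ M)) :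
    gridHaarFn M (haarIndex l) m q
      = if (fun i => haarPos M (l i) (q i)) = m then ∏ i, haarSign M (l i) (q i) else 0 := by
  simp [gridHaarFn, gridHaar, haarIndex, Fintype.prod_ite_zero, funext_iff]

lemma gridExpansion_eq_sum_haarSign (hF : ∀ p ∈ F, IsHaarIndex M p.1 p.2)
    (q : Fin d → Fin (2 ^ M)) :
    gridExpansion M F c q = ∑ l : Fin d → Fin (M + 1), (∏ i, haarSign M (l i) (q i)) *
      coeffArray F c l fun i => haarPos M (l i) (q i) := by
  classical
  have hterm (p) (hp : p ∈ F) : c p * gridHaarFn M p.1 p.2 q = ∑ l : Fin d → Fin (M + 1),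
      if p = (haarIndex l, fun i => haarPos M (l i) (q i))
        then (∏ i, haarSign M (l i) (q i)) * c p else 0 := by
    obtain ⟨l₀, hl₀⟩ := exists_haarIndex_eq (hF p hp)
    rw [Fintype.sum_eq_single l₀]
    · simp [← hl₀, gridHaarFn_haarIndex, Prod.ext_iff, eq_comm, mul_comm]
    · intro l hl
      refine if_neg fun h => hl (haarIndex_injective ?_)
      rw [hl₀, h]
  rw [gridExpansion, Finset.sum_congr rfl hterm, Finset.sum_comm]
  refine Finset.sum_congr rfl fun l _ => ?_
  simp [Finset.sum_ite_eq', coeffArray, Set.indicator_apply]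

lemma mem_dyadicBox_haarIndex (l : Fin d → Fin (M + 1)) (hx : x ∈ unitCubeIco d) :
    x ∈ dyadicBox d (haarIndex l) fun i => haarPos M (l i) (gridCell M x i) := by
  intro i _
  have hxi := hx i trivial
  have hpow : (0 : ℝ) < 2 ^ (l i - 1 : ℕ) := by positivity
  change x i ∈ dyadicI (haarIndex l i) (haarPos M (l i) (gridIndex M (x i)))
  rw [dyadicI, toNat_haarIndex, Set.mem_Ico, div_le_iff₀' hpow, lt_div_iff₀' hpow,
    ← Nat.floor_eq_iff (mul_nonneg hpow.le hxi.1), haarPos_gridIndex (l i).is_le hxi]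

lemma sum_coeffArray_sq_le_sqFnE_sq (hF : ∀ p ∈ F, IsHaarIndex M p.1 p.2)
    (hx : x ∈ unitCubeIco d) :
    ENNReal.ofReal (∑ l : Fin d → Fin (M + 1),
        coeffArray F c l (fun i => haarPos M (l i) (gridCell M x i)) ^ 2)
      ≤ sqFnE d (haarExpansion F c) x ^ 2 := by
  have hvalid (l : Fin d → Fin (M + 1)) : haarIndex l ∈ validJ d := fun i => by
    simp only [haarIndex]
    omega
  have hinj : Function.Injective fun l : Fin d → Fin (M + 1) =>
      (⟨haarIndex l, hvalid l⟩ : validJ d) :=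
    fun l l' h => haarIndex_injective (congrArg Subtype.val h)
  rw [sqFnE, one_div, ← ENNReal.rpow_natCast, Nat.cast_ofNat, ENNReal.rpow_inv_rpow two_ne_zero,
    ENNReal.ofReal_sum_of_nonneg fun _ _ => sq_nonneg _]
  refine le_trans ?_ (ENNReal.tsum_comp_le_tsum_of_injective hinj _)
  rw [tsum_fintype]
  refine Finset.sum_le_sum fun l _ => ?_
  set m : Fin d → ℕ := fun i => haarPos M (l i) (gridCell M x i)
  by_cases hmem : (haarIndex l, m) ∈ F
  · have hm : m ∈ Dfin d (haarIndex l) :=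
      Fintype.mem_piFinset.2 fun i => Finset.mem_range.2 (hF _ hmem i).2.2
    refine le_trans ?_ (Finset.single_le_sum (fun _ _ => zero_le) hm)
    refine ENNReal.ofReal_le_ofReal ?_
    rw [haarCoeff_haarExpansion hF hmem, Set.indicator_of_mem (mem_dyadicBox_haarIndex l hx),
      coeffArray, Set.indicator_of_mem (Finset.mem_coe.2 hmem), div_pow, ← pow_mul,
      mul_comm (jnorm d (haarIndex l)), mul_one, mul_div_cancel₀ _ (by positivity)]
  · simp [coeffArray, hmem]

end HaarExpansion

section HyperbolicLayer

lemma sum_coeffArray_sq_le {d M : ℕ} {B : ℝ} {F : Finset ((Fin d → ℤ) × (Fin d → ℕ))}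
    {c : (Fin d → ℤ) × (Fin d → ℕ) → ℝ} (hF : ∀ p ∈ F, IsHaarIndex M p.1 p.2) (hB : 0 ≤ B)
    (hS : essSup (sqFnE d (haarExpansion F c)) (volume.restrict (unitCube d)) ≤ ENNReal.ofReal B)
    (q : Fin d → Fin (2 ^ M)) :
    ∑ l : Fin d → Fin (M + 1), coeffArray F c l (fun i => haarPos M (l i) (q i)) ^ 2 ≤ B ^ 2 := by
  refine forall_of_ae_gridCell (P := fun q => ∑ l : Fin d → Fin (M + 1),
    coeffArray F c l (fun i => haarPos M (l i) (q i)) ^ 2 ≤ B ^ 2) ?_ q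
  filter_upwards [ENNReal.ae_le_essSup (sqFnE d (haarExpansion F c)), ae_mem_unitCubeIco d]
    with x hxS hx
  rw [← ENNReal.ofReal_le_ofReal_iff (sq_nonneg B), ENNReal.ofReal_pow hB]
  exact (sum_coeffArray_sq_le_sqFnE_sq hF hx).trans (pow_le_pow_left' (hxS.trans hS) 2)

variable {s M n k : ℕ} {B p : ℝ} {F : Finset ((Fin (s + 1) → ℤ) × (Fin (s + 1) → ℕ))}
  {c : (Fin (s + 1) → ℤ) × (Fin (s + 1) → ℕ) → ℝ}

-- On `|j| = n` the last `s` levels determine the first one, except that the two levels `-1` and `0`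
-- both contribute `0` to `|j|`.
lemma exists_card_le_two_coeffArray_cons_eq_zero
    (hn : ∀ p ∈ F, jnorm (s + 1) p.1 = n) (l' : Fin s → Fin (M + 1)) :
    ∃ T : Finset (Fin (M + 1)), T.card ≤ 2 ∧
      ∀ l₀ ∉ T, ∀ m, coeffArray F c (Fin.cons l₀ l') m = 0 := by
  set r := ∑ i, (l' i - 1 : ℕ)
  refine ⟨Finset.univ.filter fun l₀ => (l₀ - 1 : ℕ) + r = n, ?_, fun l₀ hl₀ m => ?_⟩
  · calc _ ≤ (Finset.Icc (n - r) (n - r + 1)).card := by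
          refine Finset.card_le_card_of_injOn Fin.val (fun l₀ hl₀ => ?_) Fin.val_injective.injOn
          simp only [Finset.coe_filter, Finset.mem_univ, true_and, Set.mem_ofPred_eq] at hl₀
          simp only [Finset.coe_Icc, Set.mem_Icc]
          omega
      _ ≤ 2 := by
          rw [Nat.card_Icc]
          omega
  · refine Set.indicator_of_notMem (fun hmem => hl₀ ?_) c
    simpa [jnorm, toNat_haarIndex, Fin.sum_univ_succ, r] using hn _ hmem

lemma eLpNorm_haarExpansion_two_mul_le (hF : ∀ p ∈ F, IsHaarIndex M p.1 p.2)
    (hn : ∀ p ∈ F, jnorm (s + 1) p.1 = n) (hB : 0 ≤ B)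
    (hS : essSup (sqFnE (s + 1) (haarExpansion F c)) (volume.restrict (unitCube (s + 1)))
      ≤ ENNReal.ofReal B) (hk : 1 ≤ k) :
    eLpNorm (haarExpansion F c) (ENNReal.ofReal (2 * k)) (volume.restrict (unitCube (s + 1)))
      ≤ ENNReal.ofReal √((100 * k) ^ s * (2 * B ^ 2)) := by
  have hsum : ∑ q, (gridExpansion M F c q ^ 2) ^ k
      ≤ 2 ^ (M * (s + 1)) * ((100 * k) ^ s * (2 * B ^ 2)) ^ k := by
    have h := (squareFunctionBound_haar hk M).hyperbolic (by positivity)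
      (fun l q => haarSign_sq M l q) (exists_card_le_two_coeffArray_cons_eq_zero (c := c) hn)
      (sum_coeffArray_sq_le hF hB hS)
    simp only [← gridExpansion_eq_sum_haarSign hF] at h
    convert h using 1
    simp only [Fintype.card_fin, mul_pow, pow_mul]
    push_cast
    ring
  rw [eLpNorm_unitCube_eq (haarExpansion_eq_gridExpansion hF) hk]
  refine ENNReal.ofReal_le_ofReal ?_
  rw [Real.rpow_inv_le_iff_of_pos (by positivity) (Real.sqrt_nonneg _) (by positivity),
    inv_mul_le_iff₀ (by positivity), ← Nat.cast_ofNat (R := ℝ) (n := 2), ← Nat.cast_mul,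
    Real.rpow_natCast, pow_mul √_, Real.sq_sqrt (by positivity)]
  exact_mod_cast hsum

lemma eLpNorm_haarExpansion_le (hF : ∀ p ∈ F, IsHaarIndex M p.1 p.2)
    (hn : ∀ p ∈ F, jnorm (s + 1) p.1 = n) (hB : 0 ≤ B)
    (hS : essSup (sqFnE (s + 1) (haarExpansion F c)) (volume.restrict (unitCube (s + 1)))
      ≤ ENNReal.ofReal B) (hp : 1 ≤ p) :
    eLpNorm (haarExpansion F c) (ENNReal.ofReal p) (volume.restrict (unitCube (s + 1)))
      ≤ ENNReal.ofReal (p ^ (s / 2 : ℝ) * (√(2 * 100 ^ s) * B)) := by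
  set k := ⌈p / 2⌉₊
  have hk : 1 ≤ k := Nat.one_le_ceil_iff.2 (by positivity)
  have hpk : p ≤ 2 * k := by linarith [Nat.le_ceil (p / 2)]
  have hkp : (k : ℝ) ≤ p := by
    linarith [Nat.ceil_le_two_mul (a := p / 2) (by linarith)]
  calc eLpNorm (haarExpansion F c) (ENNReal.ofReal p) (volume.restrict (unitCube (s + 1)))
      ≤ eLpNorm (haarExpansion F c) (ENNReal.ofReal (2 * k))
          (volume.restrict (unitCube (s + 1))) :=
        eLpNorm_le_eLpNorm_of_exponent_le (ENNReal.ofReal_le_ofReal hpk)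
          (aemeasurable_of_eq_comp_gridCell
            (haarExpansion_eq_gridExpansion hF)).aestronglyMeasurable
    _ ≤ ENNReal.ofReal √((100 * k) ^ s * (2 * B ^ 2)) :=
        eLpNorm_haarExpansion_two_mul_le hF hn hB hS hk
    _ ≤ ENNReal.ofReal √((100 * p) ^ s * (2 * B ^ 2)) := by gcongr
    _ = ENNReal.ofReal (p ^ (s / 2 : ℝ) * (√(2 * 100 ^ s) * B)) := by
        rw [show (100 * p) ^ s * (2 * B ^ 2) = p ^ s * (2 * 100 ^ s) * B ^ 2 by ring,
          Real.sqrt_mul' _ (sq_nonneg B), Real.sqrt_sq hB, Real.sqrt_mul (by positivity),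
          Real.sqrt_eq_rpow (p ^ s), ← Real.rpow_natCast_mul (by positivity), mul_one_div,
          mul_assoc]

lemma supLp_haarExpansion_le (hF : ∀ p ∈ F, IsHaarIndex M p.1 p.2)
    (hn : ∀ p ∈ F, jnorm (s + 1) p.1 = n) :
    supLp (s + 1) (2 / s) (haarExpansion F c) ≤ ENNReal.ofReal √(2 * 100 ^ s) *
      essSup (sqFnE (s + 1) (haarExpansion F c)) (volume.restrict (unitCube (s + 1))) := by
  refine le_ofReal_mul_of_forall_le_ofReal (by positivity) fun B hB hS => iSup_le fun p => ?_
  have hp : (0 : ℝ) < p := one_pos.trans p.2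
  calc _ ≤ ENNReal.ofReal (p ^ (-(1 / (2 / s : ℝ)))) *
        ENNReal.ofReal (p ^ (s / 2 : ℝ) * (√(2 * 100 ^ s) * B)) := by
        gcongr
        exact eLpNorm_haarExpansion_le hF hn hB.le hS p.2.le
    _ = ENNReal.ofReal (√(2 * 100 ^ s) * B) := by
        rw [← ENNReal.ofReal_mul (by positivity), one_div_div, ← mul_assoc,
          ← Real.rpow_add hp, neg_add_cancel, Real.rpow_zero, one_mul]

end HyperbolicLayer

/-- Hyperbolic Chang–Wilson–Wolff inequality: if `f` is a finite linear
combination of Haar functions `h_{j,m}` with `|j| = n`, then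
`‖f | exp(L^{2/(d-1)})‖ ≤ C ‖Sf‖_{L_∞}`. -/
theorem hyperbolic_cww (d : ℕ) (hd : 2 ≤ d) (ψ : ℝ → ℝ)
    (hψ : IsYoungExp (2 / ((d:ℝ) - 1)) ψ) :
    ∃ C : ℝ, 0 < C ∧ ∀ (n : ℕ), 1 ≤ n →
      ∀ (F : Finset ((Fin d → ℤ) × (Fin d → ℕ))) (c : (Fin d → ℤ) × (Fin d → ℕ) → ℝ),
        (∀ pm ∈ F, (∀ i, -1 ≤ pm.1 i) ∧ (∀ i, pm.2 i < 2 ^ (pm.1 i).toNat) ∧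
          jnorm d pm.1 = n) →
        orliczNorm d ψ (fun x => ∑ pm ∈ F, c pm * haarFn d pm.1 pm.2 x) ≤
          ENNReal.ofReal C *
            essSup (sqFnE d (fun x => ∑ pm ∈ F, c pm * haarFn d pm.1 pm.2 x))
              (volume.restrict (unitCubeIco d)) := by
  obtain ⟨s, rfl⟩ : ∃ s, d = s + 1 := ⟨d - 1, by omega⟩
  have hs : (0 : ℝ) < s := Nat.cast_pos.2 (by omega)
  rw [Nat.cast_add_one, add_sub_cancel_right] at hψ
  obtain ⟨C, hC, hCψ⟩ := hψ.exists_orliczNorm_le_supLp (by positivity) (s + 1)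
  refine ⟨C * √(2 * 100 ^ s), by positivity, fun n _ F c hF => ?_⟩
  have hF' : ∀ p ∈ F, IsHaarIndex (n + 1) p.1 p.2 := fun p hp => by
    obtain ⟨hj, hm, rfl⟩ := hF p hp
    exact isHaarIndex_jnorm_add_one hj hm
  change orliczNorm (s + 1) ψ (haarExpansion F c) ≤ _ *
    essSup (sqFnE (s + 1) (haarExpansion F c)) _
  rw [restrict_unitCubeIco, ENNReal.ofReal_mul hC.le, mul_assoc]
  calc orliczNorm (s + 1) ψ (haarExpansion F c)
      ≤ ENNReal.ofReal C * supLp (s + 1) (2 / s) (haarExpansion F c) :=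
        hCψ _ (aemeasurable_of_eq_comp_gridCell (haarExpansion_eq_gridExpansion hF'))
    _ ≤ _ := by gcongr; exact supLp_haarExpansion_le hF' fun p hp => (hF p hp).2.2

end
end

section
/- (Interlacing) Let d ∈ ℕ and let C_1,…,C_{2d} ∈ 𝔽_2^{ℕ×ℕ} (each with only finitely many nonzero entries in every column) generate an order 1 digital (t′,2d)-sequence over 𝔽_2. Define matrices E_1,…,E_d ∈ 𝔽_2^{ℕ×ℕ} by interlacing the rows: the (2u+v)-th row of E_j equals the (u+1)-st row of C_{2(j−1)+v}, for all j ∈ {1,…,d}, u ∈ ℕ_0 and v ∈ {1,2}. Then E_1,…,E_d generate an order 2 digital (t,d)-sequence over 𝔽_2 with t = 2t′ + d. -/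
open MeasureTheory
open scoped ENNReal

noncomputable section

/-!
Number rows from `0` and give row `k` the weight `k + 1`. The chosen rows of an interlaced matrix
split into residue classes modulo `α`, and class `v` consists of rows of the `v`-th component. If
this class reaches depth `a > 0` in its component, its deepest row is row `α * (a - 1) + v`, of
weight `α * a - (α - 1 - v)`. Deepest rows of different classes are different, so together they
weigh at most as much as the `α` largest chosen rows. Hence `α` times the total depth is at most
the weight of these rows plus `0 + 1 + ⋯ + (α - 1)`. The order `1` property makes all component
rows up to these depths independent, in particular the chosen ones.
-/

lemma sum_le_sum_of_antitone_of_isLowerSet {ι M : Type*} [LinearOrder ι] [AddCommMonoid M]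
    [PartialOrder M] [CanonicallyOrderedAdd M] {f : ι → M}
    (hf : Antitone f) {s t : Finset ι} (ht : IsLowerSet (t : Set ι)) (hst : s.card ≤ t.card) :
    ∑ i ∈ s, f i ≤ ∑ i ∈ t, f i := by
  have hcard : (s \ t).card ≤ (t \ s).card := Finset.card_sdiff_le_card_sdiff_iff.2 hst
  have hsdiff : ∑ i ∈ s \ t, f i ≤ ∑ i ∈ t \ s, f i := by
    rcases (t \ s).eq_empty_or_nonempty with hempty | hne
    · have : s \ t = ∅ := by simpa only [hempty, Finset.card_empty, Nat.le_zero,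
        Finset.card_eq_zero] using hcard
      rw [this, hempty]
    · set y := (t \ s).max' hne
      have hy : y ∈ t := (Finset.mem_sdiff.1 ((t \ s).max'_mem hne)).1
      have hle : ∀ x ∈ s \ t, f x ≤ f y := fun x hx ↦
        hf (le_of_not_ge fun hxy ↦ (Finset.mem_sdiff.1 hx).2 (ht hxy hy))
      calc ∑ i ∈ s \ t, f i ≤ (s \ t).card • f y := Finset.sum_le_card_nsmul _ _ _ hle
        _ ≤ (t \ s).card • f y := nsmul_le_nsmul_left zero_le hcard
        _ ≤ ∑ i ∈ t \ s, f i :=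
          Finset.card_nsmul_le_sum _ _ _ fun x hx ↦ hf ((t \ s).le_max' x hx)
  calc ∑ i ∈ s, f i = ∑ i ∈ s ∩ t, f i + ∑ i ∈ s \ t, f i :=
        (Finset.sum_inter_add_sum_sdiff s t f).symm
    _ ≤ ∑ i ∈ t ∩ s, f i + ∑ i ∈ t \ s, f i := by
        rw [Finset.inter_comm]
        gcongr
    _ = ∑ i ∈ t, f i := Finset.sum_inter_add_sum_sdiff t s f

lemma sum_le_sum_filter_val_lt {m α : ℕ} {f : Fin m → ℕ} (hf : Antitone f) {s : Finset (Fin m)}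
    (hs : s.card ≤ α) : ∑ l ∈ s, f l ≤ ∑ l with l.val < α, f l := by
  refine sum_le_sum_of_antitone_of_isLowerSet hf (fun a b hba ha ↦ ?_) ?_
  · simp only [Finset.coe_filter, Finset.mem_univ, true_and, Set.mem_ofPred_eq] at ha ⊢
    exact lt_of_le_of_lt hba ha
  · rw [Fin.card_filter_val_lt]
    exact le_min (card_finset_fin_le s) hs

lemma sum_filter_val_lt_one_rev_add_one (m : ℕ) :
    ∑ l : Fin m with l.val < 1, (l.rev.val + 1) = m := by
  cases m with
  | zero => simp
  | succ m => simp [Finset.sum_filter]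

lemma sum_rev_val_eq_choose_two (m : ℕ) : ∑ v : Fin m, v.rev.val = m.choose 2 := by
  calc ∑ v : Fin m, v.rev.val
      = ∑ v : Fin m, v.val :=
        Equiv.sum_comp Fin.revPerm fun v : Fin m ↦ v.val
    _ = ∑ i ∈ Finset.range m, i := Fin.sum_univ_eq_sum_range (fun i ↦ i) m
    _ = m.choose 2 := by rw [Finset.sum_range_id, Nat.choose_two_right]

lemma mul_div_add_one_eq_add_rev (α : ℕ) [NeZero α] (k : ℕ) :
    α * (k / α + 1) = k + 1 + (Fin.ofNat α k).rev.val := by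
  have hlt : k % α < α := Nat.mod_lt k (NeZero.pos α)
  have hdiv : α * (k / α) + k % α = k := Nat.div_add_mod k α
  rw [Fin.val_rev, Fin.val_ofNat, mul_add_one]
  omega

section ComponentDepth

variable {ι : Type*} [Fintype ι] (α : ℕ) [NeZero α]

/-- The number of leading rows of the `v`-th component needed to cover the rows `r` of an
interlaced matrix: row `r l` of that matrix is row `r l / α` of component `r l mod α`. It is `0` if
no row comes from component `v`. -/
def componentDepth (r : ι → ℕ) (v : Fin α) : ℕ :=
  ({l | Fin.ofNat α (r l) = v} : Finset ι).sup fun l ↦ r l / α + 1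

variable {α}

lemma div_lt_componentDepth (r : ι → ℕ) (l : ι) :
    r l / α < componentDepth α r (Fin.ofNat α (r l)) :=
  Finset.le_sup (f := fun l ↦ r l / α + 1) (by simp)

lemma exists_div_add_one_eq_componentDepth {r : ι → ℕ} {v : Fin α}
    (hv : componentDepth α r v ≠ 0) :
    ∃ l, Fin.ofNat α (r l) = v ∧ r l / α + 1 = componentDepth α r v := by
  have hne : ({l | Fin.ofNat α (r l) = v} : Finset ι).Nonempty := by
    by_contra hempty
    rw [Finset.not_nonempty_iff_eq_empty] at hempty
    exact hv (by rw [componentDepth, hempty, Finset.sup_empty, Nat.bot_eq_zero])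
  obtain ⟨l, hl, hsup⟩ := Finset.exists_mem_eq_sup _ hne fun l ↦ r l / α + 1
  exact ⟨l, (Finset.mem_filter.1 hl).2, hsup.symm⟩

theorem mul_sum_componentDepth_le {m : ℕ} {r : Fin m → ℕ} (hr : StrictAnti r) :
    α * ∑ v, componentDepth α r v ≤ ∑ l with l.val < α, (r l + 1) + α.choose 2 := by
  let residue : Fin m → Fin α := fun l ↦ Fin.ofNat α (r l)
  let deepest : Finset (Fin m) := {l | r l / α + 1 = componentDepth α r (residue l)}
  have mem_deepest {l} : l ∈ deepest ↔ r l / α + 1 = componentDepth α r (residue l) := by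
    simp [deepest]
  have hinj : Set.InjOn residue deepest := fun l hl l' hl' hres ↦ by
    have hdiv : r l / α = r l' / α := by
      have := (mem_deepest.1 hl).trans ((congrArg _ hres).trans (mem_deepest.1 hl').symm)
      omega
    exact hr.injective ((Nat.divModEquiv α).injective (Prod.ext hdiv hres))
  have hcard : deepest.card ≤ α := by
    simpa using Finset.card_le_card_of_injOn residue (fun _ _ ↦ Finset.mem_univ _) hinj
  have hdepth : ∑ l ∈ deepest, α * (r l / α + 1) = ∑ v, α * componentDepth α r v := by
    refine Finset.sum_of_injOn residue hinj (fun _ _ ↦ Finset.mem_coe.2 (Finset.mem_univ _))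
      (fun v _ hv ↦ ?_) fun l hl ↦ by rw [mem_deepest.1 hl]
    by_contra hne
    obtain ⟨l, rfl, hl⟩ := exists_div_add_one_eq_componentDepth (right_ne_zero_of_mul hne)
    exact hv ⟨l, mem_deepest.2 hl, rfl⟩
  have hrev : ∑ l ∈ deepest, (residue l).rev.val ≤ ∑ v : Fin α, v.rev.val := by
    rw [← Finset.sum_image (f := fun v : Fin α ↦ v.rev.val) hinj]
    exact Finset.sum_le_sum_of_subset (Finset.subset_univ _)
  calc α * ∑ v, componentDepth α r v
      = ∑ l ∈ deepest, (r l + 1 + (residue l).rev.val) := by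
        rw [Finset.mul_sum, ← hdepth]
        exact Finset.sum_congr rfl fun l _ ↦ mul_div_add_one_eq_add_rev α (r l)
    _ = ∑ l ∈ deepest, (r l + 1) + ∑ l ∈ deepest, (residue l).rev.val := Finset.sum_add_distrib
    _ ≤ ∑ l with l.val < α, (r l + 1) + α.choose 2 :=
        add_le_add (sum_le_sum_filter_val_lt (hr.antitone.add_const 1) hcard)
          (hrev.trans_eq (sum_rev_val_eq_choose_two α))

end ComponentDepth

theorem IsOrderNet.linearIndepOn_leadingRows {n t q d : ℕ} {C : Fin d → ℕ → ℕ → ZMod 2}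
    (hC : IsOrderNet 1 n t q d C) {a : Fin d → ℕ} (haq : ∀ i, a i ≤ q) (ha : ∑ i, a i ≤ n - t) :
    LinearIndepOn (ZMod 2) (fun p : Fin d × ℕ ↦ fun col : Fin n ↦ C p.1 p.2 col)
      {p | p.2 < a p.1} := by
  have hind := hC a (fun _ l ↦ l.rev) (fun _ ↦ Fin.rev_strictAnti)
    (fun i l ↦ l.rev.isLt.trans_le (haq i))
    (by simpa only [sum_filter_val_lt_one_rev_add_one, one_mul] using ha)
  let g (p : {p : Fin d × ℕ | p.2 < a p.1}) : Σ i, Fin (a i) := ⟨p.1.1, Fin.rev ⟨p.1.2, p.2⟩⟩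
  have hrow (p) : ((g p).2.rev : ℕ) = p.1.2 := by simp only [g, Fin.rev_rev]
  have hg : Function.Injective g := fun p p' h ↦
    Subtype.ext (Prod.ext (congrArg Sigma.fst h) (by rw [← hrow p, ← hrow p', h]))
  simpa only [LinearIndepOn, Function.comp_def, hrow] using hind.comp g hg

section Interlace

variable (α : ℕ) {d : ℕ}

/-- The position `α * j + v` of the `v`-th component of the `j`-th interlaced matrix, when
`α * d` matrices are listed in `d` consecutive blocks of length `α`. -/
def componentIndex (d : ℕ) : Fin d × Fin α ≃ Fin (α * d) :=
  finProdFinEquiv.trans (finCongr (Nat.mul_comm d α))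

variable [NeZero α]

/-- The matrix and the row that interlacing places in row `p.2` of the `p.1`-th matrix. All indices
start from `0`, so that row `α * u + v` of matrix `j` comes from row `u` of the `v`-th matrix of
block `j`. -/
def sourceRow (p : Fin d × ℕ) : Fin (α * d) × ℕ :=
  (componentIndex α d (p.1, Fin.ofNat α p.2), p.2 / α)

/-- The number of leading rows of each of the `α * d` component matrices needed to cover the rows
`r j` of the `j`-th interlaced matrix, for all `j`. -/
def sourceDepth {ν : Fin d → ℕ} (r : ∀ j, Fin (ν j) → ℕ) (i : Fin (α * d)) : ℕ :=
  Function.uncurry (fun j v ↦ componentDepth α (r j) v) ((componentIndex α d).symm i)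

variable {α}

lemma sourceRow_injective : Function.Injective (sourceRow α : Fin d × ℕ → Fin (α * d) × ℕ) := by
  rintro ⟨j, k⟩ ⟨j', k'⟩ h
  obtain ⟨hindex, hdiv⟩ := Prod.ext_iff.1 h
  obtain ⟨hj, hmod⟩ := Prod.ext_iff.1 ((componentIndex α d).injective hindex)
  exact Prod.ext hj ((Nat.divModEquiv α).injective (Prod.ext hdiv hmod))

lemma sourceDepth_componentIndex {ν : Fin d → ℕ} (r : ∀ j, Fin (ν j) → ℕ) (j : Fin d) (v : Fin α) :
    sourceDepth α r (componentIndex α d (j, v)) = componentDepth α (r j) v := by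
  rw [sourceDepth, Equiv.symm_apply_apply, Function.uncurry_apply_pair]

lemma sourceRow_snd_lt_sourceDepth {ν : Fin d → ℕ} (r : ∀ j, Fin (ν j) → ℕ) (j : Fin d)
    (l : Fin (ν j)) :
    (sourceRow α (j, r j l)).2 < sourceDepth α r (sourceRow α (j, r j l)).1 := by
  rw [sourceRow, sourceDepth_componentIndex]
  exact div_lt_componentDepth (r j) l

lemma mul_sum_sourceDepth_le {ν : Fin d → ℕ} {r : ∀ j, Fin (ν j) → ℕ}
    (hr : ∀ j, StrictAnti (r j)) :
    α * ∑ i : Fin (α * d), sourceDepth α r i ≤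
      ∑ j, ∑ l with l.val < α, (r j l + 1) + d * α.choose 2 :=
  calc α * ∑ i : Fin (α * d), sourceDepth α r i
      = ∑ j, α * ∑ v, componentDepth α (r j) v := by
        rw [← Equiv.sum_comp (componentIndex α d), Fintype.sum_prod_type, Finset.mul_sum]
        simp only [sourceDepth_componentIndex]
    _ ≤ ∑ j, (∑ l with l.val < α, (r j l + 1) + α.choose 2) :=
        Finset.sum_le_sum fun j _ ↦ mul_sum_componentDepth_le (hr j)
    _ = ∑ j, ∑ l with l.val < α, (r j l + 1) + d * α.choose 2 := by
        rw [Finset.sum_add_distrib, Fin.sum_const, smul_eq_mul]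

/-- The matrices obtained from `C` by interlacing the rows of each block of `α` consecutive
matrices. -/
def interlace {R : Type*} (C : Fin (α * d) → ℕ → R) (j : Fin d) (k : ℕ) : R :=
  C (sourceRow α (j, k)).1 (sourceRow α (j, k)).2

theorem IsOrderNet.interlace {n t q q' : ℕ} {C : Fin (α * d) → ℕ → ℕ → ZMod 2}
    (hC : IsOrderNet 1 n t q (α * d) C) (hq : n ≤ q) (ht : α * t + d * α.choose 2 ≤ α * n) :
    IsOrderNet α n (α * t + d * α.choose 2) q' d (interlace C) := by
  intro ν r hr _ hweight
  have hsum : ∑ i : Fin (α * d), sourceDepth α r i ≤ n - t := by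
    refine Nat.le_of_mul_le_mul_left ?_ (NeZero.pos α)
    have hdepth := mul_sum_sourceDepth_le (α := α) hr
    rw [Nat.mul_sub]
    omega
  have hle_q (i : Fin (α * d)) : sourceDepth α r i ≤ q :=
    (Finset.single_le_sum_of_canonicallyOrdered (Finset.mem_univ i)).trans
      (hsum.trans ((Nat.sub_le n t).trans hq))
  let g (p : Σ j, Fin (ν j)) : {p : Fin (α * d) × ℕ | p.2 < sourceDepth α r p.1} :=
    ⟨sourceRow α (p.1, r p.1 p.2), sourceRow_snd_lt_sourceDepth r p.1 p.2⟩
  have hg : Function.Injective g := by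
    rintro ⟨j, l⟩ ⟨j', l'⟩ h
    obtain ⟨hj, hrow⟩ : j = j' ∧ r j l = r j' l' :=
      Prod.mk.inj (sourceRow_injective (congrArg Subtype.val h))
    subst hj
    rw [(hr j).injective hrow]
  exact (hC.linearIndepOn_leadingRows hle_q hsum).comp g hg

end Interlace

theorem interlacing_order_two_general {α d t : ℕ} [NeZero α] {C : Fin (α * d) → ℕ → ℕ → ZMod 2}
    (hC : IsOrderSeq 1 t (α * d) C) :
    IsOrderSeq α (α * t + d * α.choose 2) d (interlace C) := by
  intro n hn
  have htn : t < n := lt_of_mul_lt_mul_left (by omega : α * t < α * n) α.zero_le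
  exact (hC n (by omega)).interlace (by omega) hn.le

/-- Interlacing: if `C 0, …, C (2d-1)` generate an order `1` digital
`(t',2d)`-sequence over `𝔽₂` and `E j` is obtained by interlacing the rows of
`C (2j)` and `C (2j+1)`, then `E 0, …, E (d-1)` generate an order `2` digital
`(2t'+d, d)`-sequence over `𝔽₂`. -/
theorem interlacing_order_two (d : ℕ) (hd : 0 < d) (t' : ℕ)
    (C : Fin (2*d) → ℕ → ℕ → ZMod 2)
    (hcol : ∀ j ℓ, ∃ K, ∀ k, K ≤ k → C j k ℓ = 0)
    (hC : IsOrderSeq 1 t' (2*d) C)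
    (E : Fin d → ℕ → ℕ → ZMod 2)
    (hE : ∀ (j : Fin d) (k ℓ : ℕ),
      E j k ℓ = C ⟨2 * (j:ℕ) + k % 2, by have := j.isLt; omega⟩ (k / 2) ℓ) :
    IsOrderSeq 2 (2 * t' + d) d E := by
  have hE_eq : E = interlace C := by
    funext j k ℓ
    rw [hE]
    exact congrArg (C · (k / 2) ℓ) (Fin.ext (Nat.add_comm _ _))
  simpa [hE_eq] using interlacing_order_two_general hC

end
end
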